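/- There exists a length metric space X homeomorphic to the plane ℂ with locally finite Hausdorff 2-measure that admits weakly quasiconformal parametrizations by both the open unit disk 𝔻 and the plane ℂ; that is, there exist K₁, K₂ ≥ 1, a weakly K₁-quasiconformal map from 𝔻 onto X and a weakly K₂-quasiconformal map from ℂ onto X. -/

import Mathlib

open Metric MeasureTheory Filter Set
open scoped ENNReal NNReal Topology

/-!
STATEMENT 9: Uniformization of length surfaces by weakly (4/π)-quasiconformal maps.

Let `X` be a length surface of locally finite Hausdorff 2-measure homeomorphic to the
2-sphere, the closed unit disk, or the plane `ℂ`.  Then there is a weakly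
`4/π`-quasiconformal map `h : Ω → X`, where `Ω` is respectively the 2-sphere, the closed
unit disk, or (in the third case) either the open unit disk or the plane.

The 2-sphere is realized as the unit sphere in Euclidean 3-space; its restricted metric
induces the same curve lengths, the same Hausdorff 2-measure and hence the same moduli of
curve families as the Riemannian spherical metric.  A map is weakly `K`-quasiconformal if
it is continuous, surjective and monotone (preimages of points are connected) and
`Mod Γ ≤ K · Mod h(Γ)` for every curve family `Γ`, where the 2-modulus is computed with
respect to the Hausdorff 2-measure (normalized so as to coincide with Lebesgue measure on
the plane) and line integrals are with respect to arc length via unit-speed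
reparametrization.
-/

/-- A curve in a metric space: a continuous map on a compact interval. -/
structure Curve (X : Type*) [MetricSpace X] where
  a : ℝ
  b : ℝ
  hab : a ≤ b
  toFun : ℝ → X
  cont : ContinuousOn toFun (Set.Icc a b)

namespace Curve
variable {X Y : Type*} [MetricSpace X] [MetricSpace Y]

/-- The length of a curve: the total variation of its parametrization. -/
noncomputable def length (γ : Curve X) : ℝ≥0∞ := eVariationOn γ.toFun (Set.Icc γ.a γ.b)

/-- The integral of `ρ` along a (rectifiable) curve with respect to arc length, computed
via the unit-speed (natural) reparametrization of the curve. -/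
noncomputable def lineIntegral (γ : Curve X) (ρ : X → ℝ≥0∞) : ℝ≥0∞ :=
  ∫⁻ s in Set.Icc (0 : ℝ) γ.length.toReal,
    ρ (naturalParameterization γ.toFun (Set.Icc γ.a γ.b) γ.a s)

/-- The image curve `h ∘ γ` under a continuous map `h`. -/
def map (γ : Curve X) (h : X → Y) (hh : Continuous h) : Curve Y :=
  ⟨γ.a, γ.b, γ.hab, h ∘ γ.toFun, hh.comp_continuousOn γ.cont⟩

end Curve

/-- The Hausdorff 2-measure, normalized so as to coincide with Lebesgue measure on `ℝ²`. -/
noncomputable def hausdorff2 (X : Type*) [MetricSpace X] [MeasurableSpace X] [BorelSpace X] :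
    Measure X := (ENNReal.ofReal (Real.pi / 4)) • MeasureTheory.Measure.hausdorffMeasure 2

/-- `ρ` is admissible for the curve family `Γ` if it is Borel and `∫_γ ρ ds ≥ 1` for
every rectifiable curve `γ ∈ Γ`. -/
def Admissible {X : Type*} [MetricSpace X] [MeasurableSpace X] [BorelSpace X]
    (ρ : X → ℝ≥0∞) (Γ : Set (Curve X)) : Prop :=
  Measurable ρ ∧ ∀ γ ∈ Γ, γ.length ≠ ⊤ → 1 ≤ γ.lineIntegral ρ

/-- The 2-modulus of a curve family, with respect to the Hausdorff 2-measure. -/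
noncomputable def modulus {X : Type*} [MetricSpace X] [MeasurableSpace X] [BorelSpace X]
    (Γ : Set (Curve X)) : ℝ≥0∞ :=
  ⨅ (ρ : X → ℝ≥0∞) (_ : Admissible ρ Γ), ∫⁻ x, (ρ x) ^ 2 ∂(hausdorff2 X)

/-- A length space: the distance between any two points is the infimum of the lengths
of curves joining them. -/
def IsLengthSpace (X : Type*) [MetricSpace X] : Prop :=
  ∀ x y : X, edist x y =
    ⨅ γ : {γ : Curve X // γ.toFun γ.a = x ∧ γ.toFun γ.b = y}, γ.1.length

/-- A weakly `K`-quasiconformal map: continuous, surjective, monotone, and satisfying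
`Mod Γ ≤ K · Mod h(Γ)` for every curve family `Γ`. -/
def WeaklyQC {A X : Type*} [MetricSpace A] [MeasurableSpace A] [BorelSpace A]
    [MetricSpace X] [MeasurableSpace X] [BorelSpace X] (K : ℝ) (h : A → X) : Prop :=
  ∃ hc : Continuous h, Function.Surjective h ∧ (∀ x : X, IsPreconnected (h ⁻¹' {x})) ∧
    ∀ Γ : Set (Curve A),
      modulus Γ ≤ ENNReal.ofReal K * modulus ((fun γ => γ.map h hc) '' Γ)

section Proof
open Metric MeasureTheory Filter Set
open scoped ENNReal NNReal Topology

theorem variation_continuousOn {E : Type*} [MetricSpace E] {f : ℝ → E} {a b : ℝ} (hab : a ≤ b)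
    (hf : ContinuousOn f (Icc a b)) (hv : BoundedVariationOn f (Icc a b)) :
    ContinuousOn (variationOnFromTo f (Icc a b) a) (Icc a b) := by
  intro x hx
  have h1 := hv.tendsto_eVariationOn_Icc_zero_left (x := x) ((hf x hx).mono inter_subset_left)
  have h2 := hv.tendsto_eVariationOn_Icc_zero_right x ((hf x hx).mono inter_subset_left)
  have h3 := (ENNReal.tendsto_toReal ENNReal.zero_ne_top).comp h1
  have h4 := (ENNReal.tendsto_toReal ENNReal.zero_ne_top).comp h2
  have h5 := h3.add h4
  simp only [ENNReal.toReal_zero, add_zero] at h5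
  rw [ContinuousWithinAt, tendsto_iff_dist_tendsto_zero]
  refine squeeze_zero' (Eventually.of_forall fun _ => dist_nonneg) ?_ h5
  filter_upwards [self_mem_nhdsWithin] with y hy
  have hl := hv.locallyBoundedVariationOn
  rw [Real.dist_eq, variationOnFromTo.sub_right hl (left_mem_Icc.2 hab) hy hx]
  simp only [Function.comp]
  rcases le_total x y with h | h
  · rw [variationOnFromTo.eq_of_le _ _ h, abs_of_nonneg ENNReal.toReal_nonneg]
    linarith [ENNReal.toReal_nonneg (a := eVariationOn f (Icc a b ∩ Icc y x))]
  · rw [variationOnFromTo.eq_of_ge _ _ h, abs_neg, abs_of_nonneg ENNReal.toReal_nonneg]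
    linarith [ENNReal.toReal_nonneg (a := eVariationOn f (Icc a b ∩ Icc x y))]

theorem piece_integral (V V' : ℝ → ℝ) {s t : ℝ} (hst : s ≤ t) (L : ℝ≥0)
    (cV : ContinuousOn V (Icc s t)) (cV' : ContinuousOn V' (Icc s t))
    (mV : MonotoneOn V (Icc s t)) (mV' : MonotoneOn V' (Icc s t))
    (hL : ∀ x ∈ Icc s t, ∀ y ∈ Icc s t, x ≤ y → V' y - V' x ≤ L * (V y - V x))
    (Tb : Set ℝ) (hT : (V' '' (Tb ∩ Icc s t)).Countable) (k k' : ℝ → ℝ≥0∞)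
    (hk : ∀ x ∈ Icc s t, x ∉ Tb → L * k' (V' x) ≤ k (V x)) :
    ∫⁻ r in Icc (V' s) (V' t), k' r ≤ ∫⁻ r in Icc (V s) (V t), k r := by
  classical
  have hs : s ∈ Icc s t := left_mem_Icc.2 hst
  have ht : t ∈ Icc s t := right_mem_Icc.2 hst
  have hVst : V s ≤ V t := mV hs ht hst
  have hsurj : ∀ r : Icc (V s) (V t), ∃ x ∈ Icc s t, V x = r := fun r =>
    intermediate_value_Icc hst cV r.2
  choose T hTm hTV using hsurj
  let θ : ℝ → ℝ := fun r => V' (T (projIcc _ _ hVst r))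
  have hL' : ∀ x ∈ Icc s t, ∀ y ∈ Icc s t, |V' x - V' y| ≤ L * |V x - V y| := by
    intro x hx y hy
    rcases le_total x y with h | h
    · rw [abs_sub_comm, abs_sub_comm (V x), abs_of_nonneg (sub_nonneg.2 (mV' hx hy h)),
        abs_of_nonneg (sub_nonneg.2 (mV hx hy h))]
      exact hL x hx y hy h
    · rw [abs_of_nonneg (sub_nonneg.2 (mV' hy hx h)),
        abs_of_nonneg (sub_nonneg.2 (mV hy hx h))]
      exact hL y hy x hx h
  have hθ : LipschitzWith L θ := by
    apply LipschitzWith.of_dist_le_mul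
    intro r r'
    rw [Real.dist_eq, Real.dist_eq]
    refine (hL' _ (hTm _) _ (hTm _)).trans ?_
    rw [hTV, hTV]
    exact mul_le_mul_of_nonneg_left (abs_projIcc_sub_projIcc hVst) L.2
  have hθV : ∀ x ∈ Icc s t, θ (V x) = V' x := by
    intro x hx
    have hm : V x ∈ Icc (V s) (V t) := ⟨mV hs hx hx.1, mV hx ht hx.2⟩
    have := hL' _ (hTm (projIcc _ _ hVst (V x))) x hx
    rw [hTV, projIcc_of_mem hVst hm] at this
    simp only [sub_self, abs_zero, mul_zero] at this
    have := abs_eq_zero.1 (le_antisymm this (abs_nonneg _))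
    simp only [θ]
    rw [projIcc_of_mem hVst hm]
    linarith
  set Z := V' '' (Tb ∩ Icc s t) with hZ
  let k0 : ℝ → ℝ≥0∞ := fun r => if r ∈ Z then 0 else k' r
  have e1 : ∫⁻ r in Icc (V' s) (V' t), k' r = ∫⁻ r in Icc (V' s) (V' t), k0 r := by
    apply lintegral_congr_ae
    apply ae_restrict_of_ae
    have : ∀ᵐ r, r ∉ Z := hT.ae_notMem volume
    filter_upwards [this] with r hr
    simp [k0, hr]
  have e2 : volume.restrict (Icc (V' s) (V' t)) ≤
      (L : ℝ≥0∞) • (Measure.map θ (volume.restrict (Icc (V s) (V t)))) := by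
    rw [Measure.le_iff]
    intro A hA
    rw [Measure.restrict_apply hA, Measure.smul_apply, Measure.map_apply hθ.continuous.measurable hA,
      Measure.restrict_apply (hθ.continuous.measurable hA), smul_eq_mul]
    have hsub : A ∩ Icc (V' s) (V' t) ⊆ θ '' (θ ⁻¹' A ∩ Icc (V s) (V t)) := by
      rintro r ⟨hrA, hr⟩
      obtain ⟨x, hx, rfl⟩ := intermediate_value_Icc hst cV' hr
      refine ⟨V x, ⟨?_, ⟨mV hs hx hx.1, mV hx ht hx.2⟩⟩, hθV x hx⟩
      simpa [hθV x hx] using hrA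
    refine (measure_mono hsub).trans ?_
    have := hθ.hausdorffMeasure_image_le (d := 1) zero_le_one (θ ⁻¹' A ∩ Icc (V s) (V t))
    rw [hausdorffMeasure_real] at this
    simpa using this
  rw [e1]
  calc ∫⁻ r in Icc (V' s) (V' t), k0 r
      ≤ ∫⁻ r, k0 r ∂((L : ℝ≥0∞) • (Measure.map θ (volume.restrict (Icc (V s) (V t))))) :=
        lintegral_mono' e2 le_rfl
    _ = L * ∫⁻ r, k0 r ∂(Measure.map θ (volume.restrict (Icc (V s) (V t)))) := by
        rw [lintegral_smul_measure, smul_eq_mul]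
    _ ≤ L * ∫⁻ r in Icc (V s) (V t), k0 (θ r) := by
        exact mul_le_mul' le_rfl (lintegral_map_le _ _)
    _ = ∫⁻ r in Icc (V s) (V t), L * k0 (θ r) := by
        rw [lintegral_const_mul' _ _ ENNReal.coe_ne_top]
    _ ≤ ∫⁻ r in Icc (V s) (V t), k r := by
        apply setLIntegral_mono' measurableSet_Icc
        intro r hr
        by_cases hz : θ r ∈ Z
        · simp [k0, hz]
        · simp only [k0, hz, if_false]
          obtain ⟨x, hx, rfl⟩ := intermediate_value_Icc hst cV hr
          rw [hθV x hx] at hz ⊢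
          apply hk x hx
          intro hxT
          exact hz ⟨x, ⟨hxT, hx⟩, rfl⟩


theorem curve_ineq {A X : Type*} [MetricSpace A] [MetricSpace X] (h : A → X) (hc : Continuous h)
    (g : A → ℝ≥0∞) (O : Set A)
    (h1 : ∀ a, ∃ U ∈ 𝓝 a, ∃ L : ℝ≥0, LipschitzOnWith L h U ∧ ∀ x ∈ U, (L : ℝ≥0∞) ≤ g x)
    (h1b : ∀ a ∈ O, ∃ U ∈ 𝓝 a, ∀ x ∈ U, h x = h a)
    (γ : Curve A) (hγ : γ.length ≠ ⊤) (ρ : X → ℝ≥0∞) :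
    (γ.map h hc).length ≠ ⊤ ∧ (γ.map h hc).lineIntegral ρ ≤
      γ.lineIntegral (Oᶜ.indicator (fun x => g x * ρ (h x))) := by
  classical
  obtain ⟨a, b, hab, f, cf⟩ := γ
  change eVariationOn f (Icc a b) ≠ ⊤ at hγ
  change eVariationOn (h ∘ f) (Icc a b) ≠ ⊤ ∧ ∫⁻ s in Icc (0 : ℝ) (eVariationOn (h ∘ f) (Icc a b)).toReal,
    ρ (naturalParameterization (h ∘ f) (Icc a b) a s) ≤
    ∫⁻ s in Icc (0 : ℝ) (eVariationOn f (Icc a b)).toReal,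
    (Oᶜ.indicator (fun x => g x * ρ (h x))) (naturalParameterization f (Icc a b) a s)
  choose U hU L hLip hLg using h1
  -- partition
  obtain ⟨t, ht0, htm, ⟨m, hm⟩, hcov⟩ := exists_monotone_Icc_subset_open_cover_Icc hab
    (c := fun p : A => (fun x : Icc a b => f x) ⁻¹' (interior (U p)))
    (fun p => isOpen_interior.preimage (continuousOn_iff_continuous_domRestrict.1 cf))
    (fun x _ => mem_iUnion.2 ⟨f x, mem_interior_iff_mem_nhds.2 (hU (f x))⟩)
  have hcov' : ∀ n, ∃ p, MapsTo f (Icc (t n : ℝ) (t (n+1))) (U p) := by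
    intro n
    obtain ⟨p, hp⟩ := hcov n
    refine ⟨p, fun x hx => interior_subset ?_⟩
    have hx' : x ∈ Icc a b := ⟨(t n).2.1.trans hx.1, hx.2.trans (t (n+1)).2.2⟩
    exact @hp ⟨x, hx'⟩ ⟨hx.1, hx.2⟩
  have hmono : ∀ n, (t n : ℝ) ≤ t (n+1) := fun n => htm (Nat.le_succ n)
  have hfin : ∀ n, eVariationOn (h ∘ f) (Icc a (t n)) ≠ ⊤ := by
    intro n
    induction n with
    | zero => rw [ht0]; simp
    | succ n ih =>
      obtain ⟨p, hp⟩ := hcov' n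
      have := eVariationOn.Icc_add_Icc (h ∘ f) (s := univ) (t n).2.1 (hmono n) (mem_univ _)
      simp only [univ_inter] at this
      rw [← this]
      refine ENNReal.add_ne_top.2 ⟨ih, ?_⟩
      refine ne_top_of_le_ne_top ?_ ((hLip p).comp_eVariationOn_le hp)
      refine ENNReal.mul_ne_top ENNReal.coe_ne_top (ne_top_of_le_ne_top hγ ?_)
      exact eVariationOn.mono _ (Icc_subset_Icc (t n).2.1 (t (n+1)).2.2)
  have htb : (t m : ℝ) = b := by rw [hm m le_rfl]
  have hfin' : eVariationOn (h ∘ f) (Icc a b) ≠ ⊤ := by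
    have := hfin m
    rwa [htb] at this
  refine ⟨hfin', ?_⟩
  have bv : BoundedVariationOn f (Icc a b) := hγ
  have bv' : BoundedVariationOn (h ∘ f) (Icc a b) := hfin'
  set V := variationOnFromTo f (Icc a b) a with hV
  set V' := variationOnFromTo (h ∘ f) (Icc a b) a with hV'
  have ha : a ∈ Icc a b := left_mem_Icc.2 hab
  have hb : b ∈ Icc a b := right_mem_Icc.2 hab
  have Va : V a = 0 := variationOnFromTo.self _ _ _
  have Va' : V' a = 0 := variationOnFromTo.self _ _ _
  have Vb : V b = (eVariationOn f (Icc a b)).toReal := by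
    rw [hV, variationOnFromTo.eq_of_le _ _ hab, inter_self]
  have Vb' : V' b = (eVariationOn (h ∘ f) (Icc a b)).toReal := by
    rw [hV', variationOnFromTo.eq_of_le _ _ hab, inter_self]
  have cV := variation_continuousOn hab cf bv
  have cV' := variation_continuousOn hab (hc.comp_continuousOn cf) bv'
  have mV : MonotoneOn V (Icc a b) := variationOnFromTo.monotoneOn bv.locallyBoundedVariationOn ha
  have mV' : MonotoneOn V' (Icc a b) :=
    variationOnFromTo.monotoneOn bv'.locallyBoundedVariationOn ha
  set k : ℝ → ℝ≥0∞ := fun s =>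
    (Oᶜ.indicator (fun x => g x * ρ (h x))) (naturalParameterization f (Icc a b) a s) with hk
  set k' : ℝ → ℝ≥0∞ := fun s => ρ (naturalParameterization (h ∘ f) (Icc a b) a s) with hk'
  have kV : ∀ x ∈ Icc a b, k (V x) = (Oᶜ.indicator (fun x => g x * ρ (h x))) (f x) := by
    intro x hx
    simp only [hk]
    rw [edist_eq_zero.1 (edist_naturalParameterization_eq_zero bv.locallyBoundedVariationOn ha hx)]
  have kV' : ∀ x ∈ Icc a b, k' (V' x) = ρ (h (f x)) := by
    intro x hx
    simp only [hk']
    rw [edist_eq_zero.1 (edist_naturalParameterization_eq_zero bv'.locallyBoundedVariationOn ha hx)]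
    rfl
  set Tb : Set ℝ := {x | f x ∈ O} with hTb
  have hTc : (V' '' (Tb ∩ Icc a b)).Countable := by
    have : ∀ x ∈ Tb ∩ Icc a b, {y | y ∈ Icc a b → V' y = V' x} ∈ 𝓝[Tb ∩ Icc a b] x := by
      rintro x ⟨hxT, hx⟩
      obtain ⟨W, hW, hWc⟩ := h1b (f x) hxT
      have h3 : f ⁻¹' W ∈ 𝓝[Icc a b] x := cf x hx hW
      rw [mem_nhdsWithin_iff] at h3
      obtain ⟨ε, hε, hsub⟩ := h3
      refine nhdsWithin_le_nhds (mem_of_superset (ball_mem_nhds x hε) ?_)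
      intro y hy hyI
      have hz : eVariationOn (h ∘ f) (Icc a b ∩ uIcc x y) = 0 := by
        apply eVariationOn.constant_on
        rintro _ ⟨u, ⟨huI, hu⟩, rfl⟩ _ ⟨v, ⟨hvI, hv⟩, rfl⟩
        have key : ∀ u ∈ uIcc x y, u ∈ Icc a b → h (f u) = h (f x) := by
          intro u hu huI
          apply hWc
          apply hsub
          refine ⟨?_, huI⟩
          rw [mem_ball, Real.dist_eq] at hy ⊢
          have := abs_sub_left_of_mem_uIcc hu
          linarith
        simp only [Function.comp]
        rw [key u hu huI, key v hv hvI]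
      have := variationOnFromTo.sub_right bv'.locallyBoundedVariationOn ha hyI hx
      change V' y - V' x = _ at this
      rcases le_total x y with hxy | hxy
      · have h5 := variationOnFromTo.sub_right bv'.locallyBoundedVariationOn ha hx hyI
        change V' x - V' y = _ at h5
        rw [uIcc_of_le hxy] at hz
        rw [variationOnFromTo.eq_of_ge _ _ hxy, hz] at h5
        simp at h5
        linarith
      · rw [uIcc_of_ge hxy] at hz
        rw [variationOnFromTo.eq_of_ge _ _ hxy, hz] at this
        simp at this
        linarith
    obtain ⟨τ, hτs, hτc, hτ⟩ := TopologicalSpace.countable_cover_nhdsWithin this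
    refine (hτc.image V').mono ?_
    rintro _ ⟨x, hx, rfl⟩
    obtain ⟨z, hz, hxz⟩ := mem_iUnion₂.1 (hτ hx)
    exact ⟨z, hz, (hxz hx.2).symm⟩
  have step : ∀ n, ∫⁻ r in Icc (V' (t n)) (V' (t (n+1))), k' r ≤
      ∫⁻ r in Icc (V (t n)) (V (t (n+1))), k r := by
    intro n
    obtain ⟨p, hp⟩ := hcov' n
    have hs : Icc (t n : ℝ) (t (n+1)) ⊆ Icc a b := Icc_subset_Icc (t n).2.1 (t (n+1)).2.2
    refine piece_integral V V' (hmono n) (L p) (cV.mono hs) (cV'.mono hs) (mV.mono hs)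
      (mV'.mono hs) ?_ Tb (hTc.mono (image_mono (inter_subset_inter_right _ hs))) k k' ?_
    · intro x hx y hy hxy
      have e1 : V y - V x = (eVariationOn f (Icc x y)).toReal := by
        have h6 := variationOnFromTo.add bv.locallyBoundedVariationOn ha (hs hx) (hs hy)
        change V x + _ = V y at h6
        rw [variationOnFromTo.eq_of_le _ _ hxy, inter_eq_self_of_subset_right (Icc_subset_Icc (hs hx).1 (hs hy).2)] at h6
        linarith
      have e2 : V' y - V' x = (eVariationOn (h ∘ f) (Icc x y)).toReal := by
        have h6 := variationOnFromTo.add bv'.locallyBoundedVariationOn ha (hs hx) (hs hy)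
        change V' x + _ = V' y at h6
        rw [variationOnFromTo.eq_of_le _ _ hxy, inter_eq_self_of_subset_right (Icc_subset_Icc (hs hx).1 (hs hy).2)] at h6
        linarith
      rw [e1, e2]
      have h7 := (hLip p).comp_eVariationOn_le (hp.mono_left (Icc_subset_Icc hx.1 hy.2))
      have h8 : eVariationOn f (Icc x y) ≠ ⊤ := ne_top_of_le_ne_top hγ
        (eVariationOn.mono _ (Icc_subset_Icc (hs hx).1 (hs hy).2))
      have := ENNReal.toReal_mono (ENNReal.mul_ne_top ENNReal.coe_ne_top h8) h7
      simpa [ENNReal.toReal_mul] using this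
    · intro x hx hxT
      rw [kV x (hs hx), kV' x (hs hx), indicator_of_mem (show f x ∈ Oᶜ from hxT)]
      exact mul_le_mul' (hLg p _ (hp hx)) le_rfl
  have main : ∀ n, ∫⁻ r in Icc (V' a) (V' (t n)), k' r ≤ ∫⁻ r in Icc (V a) (V (t n)), k r := by
    intro n
    induction n with
    | zero => rw [ht0]; simp
    | succ n ih =>
      have hl : ∀ (W : ℝ → ℝ) (q : ℝ → ℝ≥0∞), MonotoneOn W (Icc a b) →
          ∫⁻ r in Icc (W a) (W (t (n+1))), q r = (∫⁻ r in Icc (W a) (W (t n)), q r) +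
          ∫⁻ r in Icc (W (t n)) (W (t (n+1))), q r := by
        intro W q mW
        have w1 : W a ≤ W (t n) := mW ha (t n).2 (t n).2.1
        have w2 : W (t n) ≤ W (t (n+1)) := mW (t n).2 (t (n+1)).2 (hmono n)
        rw [← Icc_union_Ioc_eq_Icc w1 w2, lintegral_union measurableSet_Ioc]
        · rw [restrict_Ioc_eq_restrict_Icc]
        · rw [Set.disjoint_left]
          intro x hx hx'
          exact absurd hx.2 (not_le.2 hx'.1)
      rw [hl V k mV, hl V' k' mV']
      exact add_le_add ih (step n)
  have := main m
  rwa [htb, Va, Va', Vb, Vb'] at this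


theorem piece_measure {A X : Type*} [MetricSpace A] [MeasurableSpace A] [BorelSpace A]
    [MetricSpace X] [MeasurableSpace X] [BorelSpace X] (h : A → X) (S : Set A) (M C : ℝ≥0)
    (hinj : InjOn h S)
    (hL : ∀ x ∈ S, ∀ y ∈ S, (M : ℝ≥0∞) * edist x y ≤ C * edist (h x) (h y)) :
    (M : ℝ≥0∞) ^ 2 * μH[2] S ≤ (C : ℝ≥0∞) ^ 2 * μH[2] (h '' S) := by
  rcases eq_or_ne M 0 with rfl | hM
  · simp
  rcases S.eq_empty_or_nonempty with rfl | ⟨x0, hx0⟩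
  · simp
  have : Nonempty A := ⟨x0⟩
  have hlip : LipschitzOnWith (C / M) (Function.invFunOn h S) (h '' S) := by
    rintro _ ⟨x, hx, rfl⟩ _ ⟨y, hy, rfl⟩
    rw [hinj.leftInvOn_invFunOn hx, hinj.leftInvOn_invFunOn hy]
    have := hL x hx y hy
    rw [ENNReal.coe_div hM, ENNReal.mul_comm_div, ← mul_div_assoc]
    rw [mul_comm] at this
    rw [ENNReal.le_div_iff_mul_le (Or.inl (by simpa using hM)) (Or.inl ENNReal.coe_ne_top)]
    exact this
  have h1 := hlip.hausdorffMeasure_image_le (d := 2) (by norm_num)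
  have h2 : Function.invFunOn h S '' (h '' S) = S := hinj.invFunOn_image Subset.rfl
  rw [h2] at h1
  calc (M : ℝ≥0∞) ^ 2 * μH[2] S ≤ (M : ℝ≥0∞) ^ 2 * (((C / M : ℝ≥0) : ℝ≥0∞) ^ (2:ℝ) * μH[2] (h '' S)) :=
        mul_le_mul' le_rfl h1
    _ = (C : ℝ≥0∞) ^ 2 * μH[2] (h '' S) := by
        rw [← mul_assoc, ENNReal.rpow_ofNat, ← mul_pow, ← ENNReal.coe_mul, mul_div_cancel₀ _ hM]

theorem measure_part {A X : Type*} [MetricSpace A] [MeasurableSpace A] [BorelSpace A]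
    [PolishSpace A]
    [MetricSpace X] [MeasurableSpace X] [BorelSpace X] [SecondCountableTopology X]
    (h : A → X) (hc : Continuous h)
    (g : A → ℝ≥0∞) (O A' : Set A) (hA' : MeasurableSet A') (C : ℝ≥0)
    (hnull : μH[2] ((A' ∪ O)ᶜ) = 0) (hinj : InjOn h A')
    (h2 : ∀ a ∈ A', ∃ U ∈ 𝓝 a, ∃ M : ℝ≥0, (∀ x ∈ U ∩ A', g x ≤ M) ∧
      ∀ x ∈ U ∩ A', ∀ y ∈ U ∩ A', (M : ℝ≥0∞) * edist x y ≤ C * edist (h x) (h y))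
    (ρ : X → ℝ≥0∞) (hρ : Measurable ρ) :
    ∫⁻ x, (Oᶜ.indicator (fun x => g x * ρ (h x)) x) ^ 2 ∂(μH[2] : Measure A) ≤
      (C : ℝ≥0∞) ^ 2 * ∫⁻ x, ρ x ^ 2 ∂(μH[2] : Measure X) := by
  classical
  set μ : Measure A := μH[2]
  set ν : Measure X := μH[2]
  set q : A → ℝ≥0∞ := fun x => (Oᶜ.indicator (fun x => g x * ρ (h x)) x) ^ 2 with hq
  have hqle : ∀ x, q x ≤ (g x * ρ (h x)) ^ 2 := by
    intro x
    simp only [hq]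
    gcongr
    exact indicator_le_self _ _ _
  have e1 : ∫⁻ x, q x ∂μ ≤ ∫⁻ x in A', (g x * ρ (h x)) ^ 2 ∂μ := by
    rw [← lintegral_indicator hA']
    apply lintegral_mono_ae
    have : ∀ᵐ x ∂μ, x ∈ A' ∪ O := by
      rw [ae_iff]; exact hnull
    filter_upwards [this] with x hx
    by_cases hxA : x ∈ A'
    · rw [indicator_of_mem hxA]; exact hqle x
    · have : x ∈ O := hx.resolve_left hxA
      simp [hq, this]
  refine e1.trans ?_
  rcases A'.eq_empty_or_nonempty with rfl | hne
  · simp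
  choose! U hU M hM hMe using h2
  obtain ⟨τ, hτs, hτc, hτ⟩ := TopologicalSpace.countable_cover_nhdsWithin
    (s := A') (f := fun x => interior (U x))
    (fun x hx => nhdsWithin_le_nhds (interior_mem_nhds.2 (hU x hx)))
  have hτne : τ.Nonempty := by
    obtain ⟨x, hx⟩ := hne
    obtain ⟨z, hz, -⟩ := mem_iUnion₂.1 (hτ hx)
    exact ⟨z, hz⟩
  obtain ⟨s, rfl⟩ := hτc.exists_eq_range hτne
  set E : ℕ → Set A := fun i => A' ∩ disjointed (fun i => interior (U (s i))) i with hE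
  have hEm : ∀ i, MeasurableSet (E i) := fun i =>
    hA'.inter (MeasurableSet.disjointed (fun i => isOpen_interior.measurableSet) i)
  have hEd : Pairwise (Function.onFun Disjoint E) := fun i j hij =>
    ((disjoint_disjointed _) hij).mono inter_subset_right inter_subset_right
  have hEU : ∀ i, E i ⊆ U (s i) ∩ A' := fun i x hx =>
    ⟨interior_subset (disjointed_subset _ i hx.2), hx.1⟩
  have hEun : A' = ⋃ i, E i := by
    rw [hE, ← inter_iUnion, iUnion_disjointed, eq_comm, inter_eq_left]
    intro x hx
    obtain ⟨z, ⟨i, rfl⟩, hxz⟩ := mem_iUnion₂.1 (hτ hx)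
    exact mem_iUnion.2 ⟨i, hxz⟩
  have hsA : ∀ i, s i ∈ A' := fun i => hτs ⟨i, rfl⟩
  have hFm : ∀ i, MeasurableSet (h '' E i) := fun i =>
    (hEm i).image_of_continuousOn_injOn hc.continuousOn (hinj.mono inter_subset_left)
  have hFd : Pairwise (Function.onFun Disjoint fun i => h '' E i) := by
    intro i j hij
    refine Set.disjoint_left.2 ?_
    rintro _ ⟨x, hx, rfl⟩ ⟨y, hy, hxy⟩
    rw [hinj hy.1 hx.1 hxy] at hy
    exact Set.disjoint_left.1 (hEd hij) hx hy
  have piece : ∀ i, ∫⁻ x in E i, (g x * ρ (h x)) ^ 2 ∂μ ≤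
      (C : ℝ≥0∞) ^ 2 * ∫⁻ x in h '' E i, ρ x ^ 2 ∂ν := by
    intro i
    set m : ℝ≥0 := M (s i)
    have hle : ((m : ℝ≥0∞) ^ 2) • Measure.map h (μ.restrict (E i)) ≤
        ((C : ℝ≥0∞) ^ 2) • ν.restrict (h '' E i) := by
      rw [Measure.le_iff]
      intro T hT
      rw [Measure.smul_apply, Measure.smul_apply, Measure.map_apply hc.measurable hT,
        Measure.restrict_apply hT, Measure.restrict_apply (hc.measurable hT), smul_eq_mul,
        smul_eq_mul]
      have hsub : h ⁻¹' T ∩ E i ⊆ U (s i) ∩ A' := inter_subset_right.trans (hEU i)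
      have := piece_measure h (h ⁻¹' T ∩ E i) m C
        (hinj.mono (hsub.trans inter_subset_right))
        (fun x hx y hy => hMe (s i) (hsA i) x (hsub hx) y (hsub hy))
      rwa [image_preimage_inter] at this
    have hρ2 : Measurable fun x => ρ x ^ 2 := hρ.pow_const 2
    calc ∫⁻ x in E i, (g x * ρ (h x)) ^ 2 ∂μ ≤ ∫⁻ x in E i, (m : ℝ≥0∞) ^ 2 * ρ (h x) ^ 2 ∂μ := by
          apply setLIntegral_mono' (hEm i)
          intro x hx
          rw [mul_pow]
          gcongr
          exact hM (s i) (hsA i) x (hEU i hx)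
      _ = (m : ℝ≥0∞) ^ 2 * ∫⁻ x in E i, ρ (h x) ^ 2 ∂μ := by
          rw [lintegral_const_mul' _ _ (by finiteness)]
      _ = ∫⁻ y, ρ y ^ 2 ∂(((m : ℝ≥0∞) ^ 2) • Measure.map h (μ.restrict (E i))) := by
          rw [lintegral_smul_measure, smul_eq_mul, lintegral_map hρ2 hc.measurable]
      _ ≤ ∫⁻ y, ρ y ^ 2 ∂(((C : ℝ≥0∞) ^ 2) • ν.restrict (h '' E i)) := lintegral_mono' hle le_rfl
      _ = _ := by rw [lintegral_smul_measure, smul_eq_mul]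
  calc ∫⁻ x in A', (g x * ρ (h x)) ^ 2 ∂μ = ∑' i, ∫⁻ x in E i, (g x * ρ (h x)) ^ 2 ∂μ := by
        conv_lhs => rw [hEun]
        rw [lintegral_iUnion hEm hEd]
    _ ≤ ∑' i, (C : ℝ≥0∞) ^ 2 * ∫⁻ x in h '' E i, ρ x ^ 2 ∂ν := ENNReal.tsum_le_tsum piece
    _ = (C : ℝ≥0∞) ^ 2 * ∫⁻ x in ⋃ i, h '' E i, ρ x ^ 2 ∂ν := by
        rw [ENNReal.tsum_mul_left, lintegral_iUnion hFm hFd]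
    _ ≤ _ := mul_le_mul' le_rfl (setLIntegral_le_lintegral _ _)

theorem qc_criterion {A X : Type*} [MetricSpace A] [MeasurableSpace A] [BorelSpace A]
    [PolishSpace A]
    [MetricSpace X] [MeasurableSpace X] [BorelSpace X] [SecondCountableTopology X]
    (h : A → X) (hc : Continuous h)
    (g : A → ℝ≥0∞) (hg : Measurable g) (O A' : Set A) (hO : MeasurableSet O)
    (hA' : MeasurableSet A') (C : ℝ≥0) (hC : 0 < C)
    (h1 : ∀ a, ∃ U ∈ 𝓝 a, ∃ L : ℝ≥0, LipschitzOnWith L h U ∧ ∀ x ∈ U, (L : ℝ≥0∞) ≤ g x)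
    (h1b : ∀ a ∈ O, ∃ U ∈ 𝓝 a, ∀ x ∈ U, h x = h a)
    (hnull : μH[2] ((A' ∪ O)ᶜ) = 0) (hinj : InjOn h A')
    (h2 : ∀ a ∈ A', ∃ U ∈ 𝓝 a, ∃ M : ℝ≥0, (∀ x ∈ U ∩ A', g x ≤ M) ∧
      ∀ x ∈ U ∩ A', ∀ y ∈ U ∩ A', (M : ℝ≥0∞) * edist x y ≤ C * edist (h x) (h y))
    (hs : Function.Surjective h) (hp : ∀ x : X, IsPreconnected (h ⁻¹' {x})) :
    WeaklyQC ((C : ℝ) ^ 2) h := by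
  refine ⟨hc, hs, hp, fun Γ => ?_⟩
  have hC2 : ENNReal.ofReal ((C : ℝ) ^ 2) = (C : ℝ≥0∞) ^ 2 := by
    rw [ENNReal.ofReal_pow (NNReal.coe_nonneg C), ENNReal.ofReal_coe_nnreal]
  rw [hC2]
  unfold modulus
  have hC0 : (C : ℝ≥0∞) ^ 2 ≠ 0 := by positivity
  have hCt : (C : ℝ≥0∞) ^ 2 ≠ ⊤ := by finiteness
  rw [ENNReal.mul_iInf_of_ne hC0 hCt]
  refine le_iInf fun ρ => ?_
  rw [ENNReal.mul_iInf_of_ne hC0 hCt]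
  refine le_iInf fun hρ => ?_
  have hadm : Admissible (Oᶜ.indicator (fun x => g x * ρ (h x))) Γ := by
    refine ⟨(hg.mul (hρ.1.comp hc.measurable)).indicator hO.compl, fun γ hγ hl => ?_⟩
    obtain ⟨h3, h4⟩ := curve_ineq h hc g O h1 h1b γ hl ρ
    exact (hρ.2 _ ⟨γ, hγ, rfl⟩ h3).trans h4
  refine iInf_le_of_le _ (iInf_le_of_le hadm ?_)
  have := measure_part h hc g O A' hA' C hnull hinj h2 ρ hρ.1
  simp only [hausdorff2, lintegral_smul_measure, smul_eq_mul]
  rw [mul_left_comm]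
  exact mul_le_mul' le_rfl this

theorem WeaklyQC.comp_homeo {A B X : Type*} [MetricSpace A] [MeasurableSpace A] [BorelSpace A]
    [MetricSpace B] [MeasurableSpace B] [BorelSpace B]
    [MetricSpace X] [MeasurableSpace X] [BorelSpace X] {K1 K2 : ℝ} (e : A ≃ₜ B) {h : B → X}
    (he : WeaklyQC K1 e) (hh : WeaklyQC K2 h) (hK : 0 ≤ K1) : WeaklyQC (K1 * K2) (h ∘ e) := by
  obtain ⟨c1, -, -, m1⟩ := he
  obtain ⟨c2, s2, p2, m2⟩ := hh
  refine ⟨c2.comp c1, s2.comp e.surjective, fun x => ?_, fun Γ => ?_⟩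
  · rw [preimage_comp, ← e.image_symm]
    exact (p2 x).image _ e.symm.continuous.continuousOn
  · refine (m1 Γ).trans ?_
    rw [ENNReal.ofReal_mul hK, mul_assoc]
    refine mul_le_mul' le_rfl ((m2 _).trans (le_of_eq ?_))
    rw [image_image]
    rfl


namespace Slit

/-- the exponent of the weight -/
noncomputable def del (t : ℝ) : ℝ := 2 ^ ⌊t⌋₊ * max 0 (min (t - ⌊t⌋₊) (⌊t⌋₊ + 1 - t))

/-- the weight -/
noncomputable def wt (t : ℝ) : ℝ := Real.exp (-del t)

theorem del_nonneg (t : ℝ) : 0 ≤ del t := by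
  unfold del
  exact mul_nonneg (by positivity) (le_max_left _ _)

theorem wt_pos (t : ℝ) : 0 < wt t := Real.exp_pos _

theorem wt_le_one (t : ℝ) : wt t ≤ 1 := Real.exp_le_one_iff.2 (by linarith [del_nonneg t])

theorem del_of_nonpos {t : ℝ} (ht : t ≤ 0) : del t = 0 := by
  unfold del
  rw [Nat.floor_of_nonpos ht, max_eq_left]
  · simp
  · exact (min_le_left _ _).trans (by simpa using ht)

theorem del_nat (n : ℕ) : del n = 0 := by
  unfold del
  simp

theorem del_band (n : ℕ) {t : ℝ} (h1 : n ≤ t) (h2 : t ≤ n + 1) :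
    del t = 2 ^ n * min (t - n) (n + 1 - t) := by
  rcases h2.lt_or_eq with h | rfl
  · have : ⌊t⌋₊ = n := (Nat.floor_eq_iff (le_trans (Nat.cast_nonneg n) h1)).2 ⟨h1, h⟩
    unfold del
    rw [this, max_eq_right]
    exact le_min (by linarith) (by linarith)
  · have := del_nat (n+1)
    push_cast at this
    rw [this]
    simp

/-- gluing Lipschitz estimates -/
theorem glue {f : ℝ → ℝ} {L : ℝ} (hL : 0 ≤ L) (N : ℕ) (h0 : ∀ t ≤ 0, f t = 0)
    (h1 : ∀ n < N, ∀ s t : ℝ, n ≤ s → s ≤ t → t ≤ n + 1 → |f s - f t| ≤ L * (t - s)) :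
    ∀ s t : ℝ, s ≤ N → t ≤ N → |f s - f t| ≤ L * |s - t| := by
  have key : ∀ s t : ℝ, s ≤ t → t ≤ N → |f s - f t| ≤ L * (t - s) := by
    induction N with
    | zero =>
      intro s t hst ht
      simp only [Nat.cast_zero] at ht
      rw [h0 s (hst.trans ht), h0 t ht]
      simp only [sub_self, abs_zero]
      exact mul_nonneg hL (by linarith)
    | succ N ih =>
      have ih' := ih (fun n hn => h1 n (Nat.lt_succ_of_lt hn))
      intro s t hst ht
      push_cast at ht
      rcases le_total t N with h | h
      · exact ih' s t hst h
      rcases le_total (N : ℝ) s with h' | h'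
      · exact h1 N (Nat.lt_succ_self N) s t h' hst ht
      · have a1 := ih' s N h' le_rfl
        have a2 := h1 N (Nat.lt_succ_self N) N t le_rfl h ht
        have := abs_sub_le (f s) (f N) (f t)
        nlinarith
  intro s t hs ht
  rcases le_total s t with h | h
  · rw [abs_sub_comm s t, abs_of_nonneg (sub_nonneg.2 h)]
    exact key s t h ht
  · rw [abs_sub_comm, abs_of_nonneg (sub_nonneg.2 h)]
    exact key t s h hs

theorem del_lip (N : ℕ) {s t : ℝ} (hs : s ≤ N) (ht : t ≤ N) :
    |del s - del t| ≤ 2 ^ N * |s - t| := by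
  refine glue (by positivity) N (fun t ht => del_of_nonpos ht) ?_ s t hs ht
  intro n hn s t h1 h2 h3
  rw [del_band n h1 (h2.trans h3), del_band n (h1.trans h2) h3, ← mul_sub, abs_mul,
    abs_of_nonneg (by positivity : (0:ℝ) ≤ 2 ^ n)]
  have e : |min (s - n) (n + 1 - s) - min (t - n) (n + 1 - t)| ≤ t - s := by
    rw [abs_le]
    constructor
    · rcases min_cases (s - n) (n + 1 - s) with h | h <;>
      rcases min_cases (t - n) (n + 1 - t) with h' | h' <;> linarith
    · rcases min_cases (s - n) (n + 1 - s) with h | h <;>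
      rcases min_cases (t - n) (n + 1 - t) with h' | h' <;> linarith
  have : (2:ℝ) ^ n ≤ 2 ^ N := pow_le_pow_right₀ (by norm_num) hn.le
  calc _ ≤ 2 ^ n * (t - s) := by gcongr
    _ ≤ 2 ^ N * (t - s) := mul_le_mul_of_nonneg_right this (by linarith)

theorem del_continuous : Continuous del := by
  rw [continuous_iff_continuousAt]
  intro t
  obtain ⟨N, hN⟩ := exists_nat_gt t
  have : LipschitzOnWith (2 ^ N) del (Iic (N : ℝ)) := by
    apply LipschitzOnWith.of_dist_le_mul
    intro s hs u hu
    rw [Real.dist_eq, Real.dist_eq]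
    exact_mod_cast del_lip N hs hu
  exact this.continuousOn.continuousAt (Iic_mem_nhds hN)

theorem wt_continuous : Continuous wt := Real.continuous_exp.comp del_continuous.neg

theorem wt_lower (N : ℕ) {t : ℝ} (ht : t ≤ N) : Real.exp (-2 ^ N) ≤ wt t := by
  unfold wt
  apply Real.exp_le_exp.2
  apply neg_le_neg
  rcases le_total t 0 with h | h
  · rw [del_of_nonpos h]; positivity
  · rcases ht.eq_or_lt with rfl | ht
    · rw [del_nat]; positivity
    have h1 := Nat.floor_le h
    have h2 := (Nat.lt_floor_add_one t).le
    rw [del_band ⌊t⌋₊ h1 h2]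
    have h3 : ⌊t⌋₊ ≤ N := Nat.floor_le_of_le ht.le
    have h4 : min (t - ⌊t⌋₊) (⌊t⌋₊ + 1 - t) ≤ 1 := (min_le_left _ _).trans (by linarith)
    have h5 : 0 ≤ min (t - ⌊t⌋₊) (⌊t⌋₊ + 1 - t) := le_min (by linarith) (by linarith)
    calc _ ≤ (2:ℝ) ^ N * 1 := by
          gcongr
          norm_num
      _ = _ := mul_one _

theorem wt_nat (n : ℕ) : wt n = 1 := by simp [wt, del_nat]

theorem wt_of_nonpos {t : ℝ} (ht : t ≤ 0) : wt t = 1 := by simp [wt, del_of_nonpos ht]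

/-- distance of `2^j x` to the half integers -/
noncomputable def dd (j : ℕ) (x : ℝ) : ℝ := 1 / 2 - |2 ^ j * x - round (2 ^ j * x)|

theorem abs_sub_round_lip (a b : ℝ) : |a - round a| ≤ |b - round b| + |a - b| := by
  have h1 := round_le a (round b)
  have := abs_sub_le a b (round b)
  linarith

theorem dd_nonneg (j : ℕ) (x : ℝ) : 0 ≤ dd j x := by
  have := abs_sub_round (2 ^ j * x)
  unfold dd; linarith

theorem dd_le (j : ℕ) (x : ℝ) : dd j x ≤ 1 := by
  have := abs_nonneg (2 ^ j * x - round (2 ^ j * x))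
  unfold dd; linarith

theorem dd_lip (j : ℕ) (x y : ℝ) : |dd j x - dd j y| ≤ 2 ^ j * |x - y| := by
  have h1 := abs_sub_round_lip (2 ^ j * x) (2 ^ j * y)
  have h2 := abs_sub_round_lip (2 ^ j * y) (2 ^ j * x)
  rw [abs_sub_comm (2 ^ j * y) (2 ^ j * x)] at h2
  rw [← mul_sub, abs_mul, abs_of_nonneg (by positivity : (0:ℝ) ≤ 2 ^ j)] at h1 h2
  unfold dd
  rw [abs_le]
  constructor <;> linarith

theorem dd_continuous (j : ℕ) : Continuous (dd j) := by
  have : LipschitzWith (2 ^ j) (dd j) := by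
    apply LipschitzWith.of_dist_le_mul
    intro s u
    rw [Real.dist_eq, Real.dist_eq]
    exact_mod_cast dd_lip j s u
  exact this.continuous

theorem dd_add (j : ℕ) (x : ℝ) : 1 / 4 ≤ dd j x + dd (j + 1) x := by
  have h0 := dd_nonneg j x
  have h3 := dd_nonneg (j+1) x
  have : 1 / 2 - 2 * dd j x ≤ dd (j+1) x := by
    unfold dd
    have e : (2:ℝ) ^ (j+1) * x = 2 * (2 ^ j * x) := by ring
    rw [e]
    set a := 2 ^ j * x
    have hb := abs_sub_round a
    rcases abs_cases (a - round a) with h | h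
    · have := round_le (2 * a) (2 * round a + 1)
      push_cast at this
      rw [show 2 * a - (2 * (round a : ℝ) + 1) = -(1 - 2 * (a - round a)) by ring, abs_neg,
        abs_of_nonneg (a := 1 - 2 * (a - (round a : ℝ))) (by linarith)] at this
      linarith
    · have := round_le (2 * a) (2 * round a - 1)
      push_cast at this
      rw [show 2 * a - (2 * (round a : ℝ) - 1) = (1 + 2 * (a - round a)) by ring,
        abs_of_nonneg (a := 1 + 2 * (a - (round a : ℝ))) (by linarith)] at this
      linarith
  linarith

/-- truncation to the unit interval -/
noncomputable def cl (s : ℝ) : ℝ := max 0 (min s 1)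

theorem cl_nonneg (s : ℝ) : 0 ≤ cl s := le_max_left _ _
theorem cl_le (s : ℝ) : cl s ≤ 1 := max_le (by norm_num) (min_le_right _ _)
theorem cl_mono : Monotone cl := fun _ _ h => max_le_max le_rfl (min_le_min h le_rfl)
theorem cl_of_nonpos {s : ℝ} (h : s ≤ 0) : cl s = 0 := max_eq_left ((min_le_left _ _).trans h)
theorem cl_of_one {s : ℝ} (h : 1 ≤ s) : cl s = 1 := by
  unfold cl; rw [min_eq_right h]; norm_num
theorem cl_of_mem {s : ℝ} (h : 0 ≤ s) (h' : s ≤ 1) : cl s = s := by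
  unfold cl; rw [min_eq_left h', max_eq_right h]
theorem cl_lip (s t : ℝ) : |cl s - cl t| ≤ |s - t| := by
  unfold cl
  refine (abs_max_sub_max_le_max 0 (min s 1) 0 (min t 1)).trans ?_
  simp only [sub_self, abs_zero]
  refine max_le (abs_nonneg _) ?_
  refine (abs_min_sub_min_le_max s 1 t 1).trans ?_
  simp

/-- partial height function -/
noncomputable def Gn (N : ℕ) (x y : ℝ) : ℝ :=
  min y 0 + ∑ j ∈ Finset.range N, dd j x * cl (y - j)

/-- height function -/
noncomputable def G (x y : ℝ) : ℝ := Gn ⌈y⌉₊ x y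

theorem G_eq (N : ℕ) {x y : ℝ} (h : y ≤ N) : G x y = Gn N x y := by
  unfold G Gn
  congr 1
  apply Finset.sum_subset
  · intro j hj
    rw [Finset.mem_range] at *
    exact hj.trans_le (Nat.ceil_le.2 h)
  · intro j _ hj
    rw [Finset.mem_range, not_lt, Nat.ceil_le] at hj
    rw [cl_of_nonpos (by linarith), mul_zero]

theorem Gn_sub (N : ℕ) (x y y' : ℝ) : Gn N x y' - Gn N x y =
    (min y' 0 - min y 0) + ∑ j ∈ Finset.range N, dd j x * (cl (y' - j) - cl (y - j)) := by
  unfold Gn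
  simp only [mul_sub, Finset.sum_sub_distrib]
  ring

theorem G_mono (x : ℝ) : Monotone (G x) := by
  intro y y' h
  obtain ⟨N, hN⟩ := exists_nat_ge y'
  rw [G_eq N hN, G_eq N (h.trans hN)]
  have := Gn_sub N x y y'
  have h1 : 0 ≤ ∑ j ∈ Finset.range N, dd j x * (cl (y' - j) - cl (y - j)) :=
    Finset.sum_nonneg fun j _ => mul_nonneg (dd_nonneg _ _) (sub_nonneg.2 (cl_mono (by linarith)))
  have h2 : min y 0 ≤ min y' 0 := min_le_min h le_rfl
  linarith

/-- the slits -/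
def S : Set ℂ := {z | ∃ j : ℕ, dd j z.re = 0 ∧ j ≤ z.im ∧ z.im ≤ j + 1}

theorem G_const {x y y' : ℝ} (h : y < y') (hG : G x y = G x y') :
    (∃ j : ℕ, dd j x = 0 ∧ j ≤ y ∧ y ≤ j + 1) ∧ (∃ j : ℕ, dd j x = 0 ∧ j ≤ y' ∧ y' ≤ j + 1) := by
  obtain ⟨N, hN⟩ := exists_nat_ge y'
  rw [G_eq N hN, G_eq N (h.le.trans hN)] at hG
  have hs := Gn_sub N x y y'
  rw [hG, sub_self] at hs
  have hn : ∀ j ∈ Finset.range N, 0 ≤ dd j x * (cl (y' - j) - cl (y - j)) :=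
    fun j _ => mul_nonneg (dd_nonneg _ _) (sub_nonneg.2 (cl_mono (by linarith)))
  have h1 := Finset.sum_nonneg hn
  have h2 : min y 0 ≤ min y' 0 := min_le_min h.le le_rfl
  have hy : 0 ≤ y := by
    by_contra hy
    push Not at hy
    have : min y 0 < min y' 0 := by
      rw [min_eq_left hy.le]; exact lt_min h hy
    linarith
  have hz := (Finset.sum_eq_zero_iff_of_nonneg hn).1 (by linarith)
  have key : ∀ j : ℕ, j < N → cl (y - j) < cl (y' - j) → dd j x = 0 := by
    intro j hj hc
    have := hz j (Finset.mem_range.2 hj)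
    rcases mul_eq_zero.1 this with h | h
    · exact h
    · linarith
  constructor
  · refine ⟨⌊y⌋₊, ?_, Nat.floor_le hy, (Nat.lt_floor_add_one y).le⟩
    have a1 := Nat.floor_le hy
    have a2 := Nat.lt_floor_add_one y
    apply key
    · have : (⌊y⌋₊ : ℝ) < N := by linarith
      exact_mod_cast this
    · rw [cl_of_mem (by linarith) (by linarith)]
      unfold cl
      rw [lt_max_iff]
      right
      rw [lt_min_iff]
      constructor <;> linarith
  · have hy' : 0 < y' := by linarith
    obtain ⟨m, hm⟩ : ∃ m, ⌈y'⌉₊ = m + 1 := Nat.exists_eq_succ_of_ne_zero (Nat.ceil_pos.2 hy').ne'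
    have a1 := Nat.le_ceil y'
    have a2 := Nat.ceil_lt_add_one hy'.le
    have a3 : ⌈y'⌉₊ ≤ N := Nat.ceil_le.2 hN
    rw [hm] at a1 a2 a3
    push_cast at a1 a2
    refine ⟨m, ?_, by linarith, a1⟩
    apply key _ (by omega)
    rw [cl_of_mem (s := y' - m) (by linarith) (by linarith)]
    unfold cl
    rw [max_lt_iff]
    exact ⟨by linarith, (min_le_left _ _).trans_lt (by linarith)⟩

/-- the folding map -/
noncomputable def F (z : ℂ) : ℂ := ⟨z.re, G z.re z.im⟩

theorem F_inj {p q : ℂ} (hp : p ∉ S) (h : F p = F q) : p = q := by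
  have h1 : p.re = q.re := show (F p).re = (F q).re from congrArg Complex.re h
  have h2 : G p.re p.im = G q.re q.im := show (F p).im = (F q).im from congrArg Complex.im h
  rw [← h1] at h2
  apply Complex.ext h1
  by_contra hne
  rcases lt_or_gt_of_ne hne with hl | hl
  · exact hp (G_const hl h2).1
  · exact hp (G_const hl h2.symm).2

theorem G_lip (N : ℕ) {x y x' y' : ℝ} (h : y ≤ N) (h' : y' ≤ N) :
    |G x y - G x' y'| ≤ (1 + ∑ j ∈ Finset.range N, (2 ^ j + 1)) * (|x - x'| + |y - y'|) := by
  rw [G_eq N h, G_eq N h']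
  have hs : Gn N x y - Gn N x' y' = (min y 0 - min y' 0) +
      ∑ j ∈ Finset.range N, (dd j x * cl (y - j) - dd j x' * cl (y' - j)) := by
    unfold Gn
    simp only [Finset.sum_sub_distrib]
    ring
  rw [hs]
  refine (abs_add_le _ _).trans ?_
  rw [add_mul, one_mul, Finset.sum_mul]
  have hx := abs_nonneg (x - x')
  have hy := abs_nonneg (y - y')
  apply add_le_add
  · refine (abs_min_sub_min_le_max y 0 y' 0).trans ?_
    simp only [sub_self, abs_zero]
    exact max_le (by linarith) (by linarith)
  · refine (Finset.abs_sum_le_sum_abs _ _).trans (Finset.sum_le_sum fun j _ => ?_)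
    have e : dd j x * cl (y - j) - dd j x' * cl (y' - j) =
      (dd j x - dd j x') * cl (y - j) + dd j x' * (cl (y - j) - cl (y' - j)) := by ring
    rw [e]
    refine (abs_add_le _ _).trans ?_
    rw [abs_mul, abs_mul, abs_of_nonneg (cl_nonneg _), abs_of_nonneg (dd_nonneg _ _)]
    have a1 := dd_lip j x x'
    have a2 := cl_lip (y - j) (y' - j)
    have a3 := cl_le (y - j)
    have a4 := dd_le j x'
    have a5 := dd_nonneg j x'
    have a6 := cl_nonneg (y - j)
    rw [sub_sub_sub_cancel_right] at a2
    have b1 : |dd j x - dd j x'| * cl (y - j) ≤ (2 ^ j * |x - x'|) * 1 :=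
      mul_le_mul a1 a3 a6 (by positivity)
    have b2 : dd j x' * |cl (y - j) - cl (y' - j)| ≤ 1 * |y - y'| :=
      mul_le_mul a4 a2 (abs_nonneg _) zero_le_one
    have : (0:ℝ) ≤ 2 ^ j * |y - y'| := by positivity
    nlinarith

theorem F_lip (N : ℕ) : ∃ C : ℝ, 0 < C ∧ ∀ p q : ℂ, p.im ≤ N → q.im ≤ N →
    dist (F p) (F q) ≤ C * dist p q := by
  set c : ℝ := 1 + ∑ j ∈ Finset.range N, (2 ^ j + 1) with hc
  have hc0 : 0 < c := by positivity
  refine ⟨1 + 2 * c, by positivity, fun p q hp hq => ?_⟩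
  have h := G_lip N (x := p.re) (x' := q.re) hp hq
  rw [← hc] at h
  have h1 := Complex.abs_re_le_norm (p - q)
  have h2 := Complex.abs_im_le_norm (p - q)
  rw [Complex.sub_re] at h1
  rw [Complex.sub_im] at h2
  rw [dist_eq_norm, dist_eq_norm]
  have h3 := Complex.norm_le_abs_re_add_abs_im (F p - F q)
  simp only [Complex.sub_re, Complex.sub_im, F] at h3
  have h4 : c * (|p.re - q.re| + |p.im - q.im|) ≤ c * (2 * ‖p - q‖) := by
    gcongr; linarith
  simp only [F]
  linarith

theorem F_continuous : Continuous F := by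
  rw [continuous_iff_continuousAt]
  intro p
  obtain ⟨N, hN⟩ := exists_nat_gt p.im
  obtain ⟨C, hC, h⟩ := F_lip N
  have : LipschitzOnWith ⟨C, hC.le⟩ F {z | z.im ≤ N} :=
    LipschitzOnWith.of_dist_le_mul fun p hp q hq => h p q hp hq
  refine this.continuousOn.continuousAt ?_
  exact mem_of_superset ((isOpen_lt Complex.continuous_im continuous_const).mem_nhds hN)
    (fun z (hz : z.im < N) => hz.le)

theorem G_of_nonpos {x y : ℝ} (h : y ≤ 0) : G x y = y := by
  have := G_eq 0 (x := x) (y := y) (by simpa using h)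
  rw [this]; simp [Gn, h]

theorem G_even (x : ℝ) (m : ℕ) : (m : ℝ) / 4 ≤ G x (2 * m) := by
  have h1 := G_eq (2 * m) (x := x) (y := 2 * m) (by push_cast; rfl)
  rw [h1]
  unfold Gn
  rw [min_eq_right (by positivity), zero_add]
  have h2 : ∑ j ∈ Finset.range (2 * m), dd j x * cl (2 * m - j) = ∑ j ∈ Finset.range (2 * m), dd j x := by
    apply Finset.sum_congr rfl
    intro j hj
    rw [Finset.mem_range] at hj
    have : (j : ℝ) + 1 ≤ 2 * m := by exact_mod_cast hj
    rw [cl_of_one (by linarith), mul_one]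
  rw [h2]
  clear h1 h2
  induction m with
  | zero => simp
  | succ m ih =>
    rw [show 2 * (m + 1) = 2 * m + 1 + 1 by ring, Finset.sum_range_succ, Finset.sum_range_succ]
    have := dd_add (2 * m) x
    push_cast
    linarith

theorem G_coercive (R : ℝ) : ∃ N : ℕ, ∀ x y : ℝ, N ≤ y → R < G x y := by
  obtain ⟨m, hm⟩ := exists_nat_gt (4 * R)
  refine ⟨2 * m, fun x y hy => ?_⟩
  have h1 := G_even x m
  have h2 := G_mono x (show (2 * m : ℝ) ≤ y by exact_mod_cast hy)
  linarith

theorem G_continuous (x : ℝ) : Continuous (G x) := by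
  have h1 : Continuous fun y : ℝ => (⟨x, y⟩ : ℂ) := by
    have : (fun y : ℝ => (⟨x, y⟩ : ℂ)) = fun y : ℝ => (x : ℂ) + y * Complex.I := by
      ext y; apply Complex.ext <;> simp
    rw [this]; fun_prop
  exact Complex.continuous_im.comp (F_continuous.comp h1)

theorem F_surjective : Function.Surjective F := by
  intro b
  obtain ⟨N, hN⟩ := G_coercive b.im
  have h0 : G b.re (min b.im 0) ≤ b.im := by
    rw [G_of_nonpos (min_le_right _ _)]; exact min_le_left _ _
  have hle : min b.im 0 ≤ N := (min_le_right _ _).trans (Nat.cast_nonneg N)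
  obtain ⟨y, -, hy⟩ := intermediate_value_Icc hle (G_continuous b.re).continuousOn
    ⟨h0, (hN b.re N le_rfl).le⟩
  exact ⟨⟨b.re, y⟩, Complex.ext rfl hy⟩

theorem F_proper : IsProperMap F := by
  rw [isProperMap_iff_tendsto_cocompact]
  refine ⟨F_continuous, ?_⟩
  have : Tendsto (fun z => ‖F z‖) (cocompact ℂ) atTop := by
    rw [Filter.tendsto_atTop]
    intro R
    obtain ⟨N, hN⟩ := G_coercive R
    have hn := tendsto_norm_cocompact_atTop (E := ℂ)
    filter_upwards [hn.eventually_ge_atTop (2 * (|R| + N))] with z hz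
    by_contra hlt
    push Not at hlt
    have a1 := Complex.abs_re_le_norm (F z)
    have a2 := Complex.abs_im_le_norm (F z)
    have a3 := Complex.norm_le_abs_re_add_abs_im z
    simp only [F] at a1 a2 hlt
    have hR := le_abs_self R
    have b1 : |z.re| < R := by linarith
    have b2 : |G z.re z.im| < R := by linarith
    rw [abs_lt] at b2
    have b3 : z.im < N := by
      by_contra h
      push Not at h
      have := hN z.re z.im h
      linarith
    have hN0 : (0:ℝ) ≤ N := Nat.cast_nonneg N
    have b4 : -R < z.im := by
      rcases le_total z.im 0 with h | h
      · rw [G_of_nonpos h] at b2; exact b2.1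
      · have := abs_nonneg z.re
        linarith
    have b5 : |z.im| < R + N := by rw [abs_lt]; constructor <;> linarith [abs_nonneg z.re]
    linarith
  rw [← Metric.cobounded_eq_cocompact, ← comap_norm_atTop, comap_norm_atTop] at *
  rw [← comap_norm_atTop (E := ℂ), tendsto_comap_iff, comap_norm_atTop]
  exact this

theorem F_quotient : Topology.IsQuotientMap F :=
  F_proper.isClosedMap.isQuotientMap F_continuous F_surjective

theorem S_closed : IsClosed S := by
  have : S = ⋃ j : ℕ, {z : ℂ | dd j z.re = 0 ∧ j ≤ z.im ∧ z.im ≤ j + 1} := by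
    ext z; simp [S]
  rw [this]
  apply LocallyFinite.isClosed_iUnion
  · intro z
    obtain ⟨N, hN⟩ := exists_nat_gt z.im
    refine ⟨{z | z.im < N}, (isOpen_lt Complex.continuous_im continuous_const).mem_nhds hN, ?_⟩
    refine (Set.finite_lt_nat N).subset ?_
    rintro j ⟨u, ⟨-, hu, -⟩, hu'⟩
    have : (j : ℝ) < N := hu.trans_lt hu'
    exact_mod_cast this
  · intro j
    refine (isClosed_eq ((dd_continuous j).comp Complex.continuous_re) continuous_const).inter ?_
    exact (isClosed_le continuous_const Complex.continuous_im).inter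
      (isClosed_le Complex.continuous_im continuous_const)

end Slit


namespace Slit

/-- test functions -/
def Adm (φ : ℂ → ℝ) : Prop := ∀ p q : ℂ, ∀ L : ℝ, (∀ y ∈ uIcc p.im q.im, wt y ≤ L) →
  |φ (F p) - φ (F q)| ≤ L * dist p q

theorem Adm.zero : Adm (fun _ => 0) := by
  intro p q L h
  have := h p.im left_mem_uIcc
  have h2 := wt_pos p.im
  simp only [sub_self, abs_zero]
  exact mul_nonneg (by linarith) dist_nonneg

instance : Nonempty {φ // Adm φ} := ⟨⟨_, Adm.zero⟩⟩

/-- the distance -/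
noncomputable def sd (a b : ℂ) : ℝ := ⨆ φ : {φ // Adm φ}, |φ.1 a - φ.1 b|

theorem sd_bdd (a b : ℂ) : BddAbove (range fun φ : {φ // Adm φ} => |φ.1 a - φ.1 b|) := by
  obtain ⟨p, rfl⟩ := F_surjective a
  obtain ⟨q, rfl⟩ := F_surjective b
  refine ⟨1 * dist p q, ?_⟩
  rintro _ ⟨φ, rfl⟩
  exact φ.2 p q 1 (fun y _ => wt_le_one y)

theorem le_sd {φ : ℂ → ℝ} (h : Adm φ) (a b : ℂ) : |φ a - φ b| ≤ sd a b :=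
  le_ciSup (f := fun φ : {φ // Adm φ} => |φ.1 a - φ.1 b|) (sd_bdd a b) ⟨φ, h⟩

theorem sd_le {p q : ℂ} {L : ℝ} (h : ∀ y ∈ uIcc p.im q.im, wt y ≤ L) :
    sd (F p) (F q) ≤ L * dist p q :=
  ciSup_le fun φ => φ.2 p q L h

theorem sd_nonneg (a b : ℂ) : 0 ≤ sd a b := by
  have := le_sd Adm.zero a b
  simpa using this

theorem bump_adm (a : ℂ) : ∃ c > 0, Adm fun b => c * max 0 (1 - dist b a) := by
  obtain ⟨N, hN⟩ := G_coercive (a.im + 1)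
  obtain ⟨C, hC, hF⟩ := F_lip N
  set m := Real.exp (-2 ^ N) with hm
  have hm0 : 0 < m := Real.exp_pos _
  refine ⟨m / C, by positivity, ?_⟩
  set ψ : ℂ → ℝ := fun z => max 0 (1 - dist (F z) a) with hψ
  have hz : ∀ z : ℂ, N ≤ z.im → ψ z = 0 := by
    intro z hz
    have h1 := hN z.re z.im hz
    have h2 := Complex.abs_im_le_norm (F z - a)
    rw [Complex.sub_im, ← dist_eq_norm] at h2
    have h3 := le_abs_self ((F z).im - a.im)
    have h4 : (F z).im = G z.re z.im := rfl
    apply max_eq_left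
    linarith
  let τ : ℂ → ℂ := fun z => ⟨z.re, min z.im N⟩
  have hτ : ∀ z, ψ (τ z) = ψ z := by
    intro z
    rcases le_total z.im N with h | h
    · have : τ z = z := Complex.ext rfl (min_eq_left h)
      rw [this]
    · rw [hz z h, hz (τ z)]
      exact (min_eq_right h).ge
  have hτd : ∀ p q, dist (τ p) (τ q) ≤ dist p q := by
    intro p q
    rw [Complex.dist_eq_re_im, Complex.dist_eq_re_im]
    apply Real.sqrt_le_sqrt
    have : (min p.im N - min q.im N) ^ 2 ≤ (p.im - q.im) ^ 2 := by
      apply sq_le_sq.2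
      refine (abs_min_sub_min_le_max p.im N q.im N).trans ?_
      simp
    simp only [τ]
    linarith
  have hτN : ∀ z, (τ z).im ≤ N := fun z => min_le_right _ _
  have key : ∀ p q, |ψ p - ψ q| ≤ C * dist p q := by
    intro p q
    rw [← hτ p, ← hτ q]
    refine (abs_max_sub_max_le_max 0 _ 0 _).trans ?_
    simp only [sub_self, abs_zero, sub_sub_sub_cancel_left]
    refine max_le (by positivity) ?_
    rw [abs_sub_comm]
    refine (abs_dist_sub_le _ _ _).trans ((hF _ _ (hτN p) (hτN q)).trans ?_)
    exact mul_le_mul_of_nonneg_left (hτd p q) hC.le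
  intro p q L hL
  change |m / C * ψ p - m / C * ψ q| ≤ _
  rw [← mul_sub, abs_mul, abs_of_pos (by positivity)]
  have hd : (0:ℝ) ≤ dist p q := dist_nonneg
  have hfin : m ≤ L → m / C * |ψ p - ψ q| ≤ L * dist p q := by
    intro hmL
    calc m / C * |ψ p - ψ q| ≤ m / C * (C * dist p q) :=
          mul_le_mul_of_nonneg_left (key p q) (by positivity)
      _ = m * dist p q := by field_simp
      _ ≤ L * dist p q := mul_le_mul_of_nonneg_right hmL hd
  rcases le_total p.im N with h | h
  · exact hfin ((wt_lower N h).trans (hL _ left_mem_uIcc))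
  rcases le_total q.im N with h' | h'
  · exact hfin ((wt_lower N h').trans (hL _ right_mem_uIcc))
  rw [hz p h, hz q h']
  simp only [sub_self, abs_zero, mul_zero]
  exact mul_nonneg ((wt_pos _).le.trans (hL _ left_mem_uIcc)) hd

theorem sd_lower (a : ℂ) : ∃ c > 0, ∀ b, c * min 1 (dist b a) ≤ sd b a := by
  obtain ⟨c, hc, h⟩ := bump_adm a
  refine ⟨c, hc, fun b => ?_⟩
  have h1 := le_sd h b a
  simp only [dist_self, sub_zero] at h1
  rw [← mul_sub, abs_mul, abs_of_pos hc] at h1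
  refine le_trans (mul_le_mul_of_nonneg_left ?_ hc.le) h1
  rw [abs_sub_comm]
  refine le_trans ?_ (le_abs_self _)
  rw [max_eq_right zero_le_one]
  rcases le_total 1 (dist b a) with h | h
  · rw [min_eq_left h, max_eq_left (by linarith)]; norm_num
  · rw [min_eq_right h, max_eq_right (by linarith)]; linarith

theorem loc_lower {p : ℂ} (hp : p ∉ S) {m : ℝ} (hm : m < wt p.im) (hm0 : 0 < m) :
    ∃ ε > 0, ∀ x ∈ ball p ε, ∀ y ∈ ball p ε, m * dist x y ≤ sd (F x) (F y) := by
  have hev : ∀ᶠ z in 𝓝 p, z ∉ S ∧ m < wt z.im :=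
    (show ∀ᶠ z in 𝓝 p, z ∉ S from S_closed.isOpen_compl.mem_nhds hp).and
      ((wt_continuous.comp Complex.continuous_im).continuousAt.eventually_const_lt hm)
  obtain ⟨r, hr, hball⟩ := Metric.eventually_nhds_iff_ball.1 hev
  refine ⟨r / 4, by positivity, fun x hx y hy => ?_⟩
  have hxr : ball x (r / 2) ⊆ ball p r := by
    apply ball_subset_ball'
    rw [mem_ball] at hx; linarith
  set ψ : ℂ → ℝ := fun z => max 0 (r / 2 - dist z x) with hψ
  have hz : ∀ z, z ∉ ball x (r / 2) → ψ z = 0 := by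
    intro z hz
    rw [mem_ball, not_lt] at hz
    exact max_eq_left (by linarith)
  have hinv : ∀ z, ψ (Function.surjInv F_surjective (F z)) = ψ z := by
    intro z
    set z' := Function.surjInv F_surjective (F z) with hz'
    have hF : F z' = F z := Function.surjInv_eq F_surjective (F z)
    by_cases h : z ∈ ball x (r / 2)
    · rw [F_inj (hball z (hxr h)).1 hF.symm]
    · by_cases h' : z' ∈ ball x (r / 2)
      · rw [F_inj (hball z' (hxr h')).1 hF]
      · rw [hz z h, hz z' h']
  have hadm : Adm fun b => m * ψ (Function.surjInv F_surjective b) := by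
    intro u v L hL
    simp only [hinv]
    rw [← mul_sub, abs_mul, abs_of_pos hm0]
    have hd : (0:ℝ) ≤ dist u v := dist_nonneg
    have hle : |ψ u - ψ v| ≤ dist u v := by
      refine (abs_max_sub_max_le_max 0 _ 0 _).trans ?_
      simp only [sub_self, abs_zero, sub_sub_sub_cancel_left]
      refine max_le hd ?_
      rw [abs_sub_comm]
      exact abs_dist_sub_le _ _ _
    have hfin : m ≤ L → m * |ψ u - ψ v| ≤ L * dist u v := fun h =>
      mul_le_mul h hle (abs_nonneg _) (hm0.le.trans h)
    by_cases h : u ∈ ball x (r / 2)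
    · exact hfin ((hball u (hxr h)).2.le.trans (hL _ left_mem_uIcc))
    by_cases h' : v ∈ ball x (r / 2)
    · exact hfin ((hball v (hxr h')).2.le.trans (hL _ right_mem_uIcc))
    rw [hz u h, hz v h']
    simp only [sub_self, abs_zero, mul_zero]
    exact mul_nonneg ((wt_pos _).le.trans (hL _ left_mem_uIcc)) hd
  have h1 := le_sd hadm (F x) (F y)
  simp only [hinv] at h1
  rw [← mul_sub, abs_mul, abs_of_pos hm0] at h1
  refine le_trans (mul_le_mul_of_nonneg_left ?_ hm0.le) h1
  refine le_trans ?_ (le_abs_self _)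
  have hxy : dist x y ≤ r / 2 := by
    have := dist_triangle_right x y p
    rw [mem_ball] at hx hy
    linarith
  simp only [hψ, dist_self, sub_zero]
  rw [max_eq_right (by positivity), dist_comm y x, max_eq_right (by linarith)]
  linarith

/-- the surface -/
def Surf : Type := ℂ

noncomputable instance : MetricSpace Surf where
  dist a b := sd a b
  dist_self a := by simp [sd]
  dist_comm a b := by simp only [sd, abs_sub_comm]
  dist_triangle a b c := by
    apply ciSup_le
    intro φ
    exact (abs_sub_le _ (φ.1 b) _).trans (add_le_add (le_sd φ.2 a b) (le_sd φ.2 b c))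
  eq_of_dist_eq_zero := by
    intro a b h
    obtain ⟨c, hc, hb⟩ := sd_lower b
    have h1 := hb a
    have h2 : sd a b = 0 := h
    rw [h2] at h1
    have h3 : min 1 (dist (α := ℂ) a b) ≤ 0 := by
      by_contra h
      push Not at h
      have := mul_pos hc h
      linarith
    have h4 : dist (α := ℂ) a b ≤ 0 := by
      rcases min_le_iff.1 h3 with h | h
      · norm_num at h
      · exact h
    have h5 : @Eq ℂ a b := dist_le_zero.1 h4
    exact h5

noncomputable instance : MeasurableSpace Surf := borel Surf
instance : BorelSpace Surf := ⟨rfl⟩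

theorem Surf.dist_def (a b : Surf) : dist a b = sd a b := rfl

/-- folding as a map to the surface -/
noncomputable def FS (z : ℂ) : Surf := F z

theorem FS_lip : LipschitzWith 1 FS := by
  apply LipschitzWith.of_dist_le_mul
  intro p q
  exact sd_le (fun y _ => wt_le_one y)

theorem FS_le {p q : ℂ} {L : ℝ} (h : ∀ y ∈ uIcc p.im q.im, wt y ≤ L) :
    dist (FS p) (FS q) ≤ L * dist p q := sd_le h

theorem FS_surjective : Function.Surjective FS := F_surjective

theorem FS_inj {p q : ℂ} (hp : p ∉ S) (h : FS p = FS q) : p = q := F_inj hp h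

theorem FS_lower {p : ℂ} (hp : p ∉ S) {m : ℝ} (hm : m < wt p.im) (hm0 : 0 < m) :
    ∃ ε > 0, ∀ x ∈ ball p ε, ∀ y ∈ ball p ε, m * dist x y ≤ dist (FS x) (FS y) :=
  loc_lower hp hm hm0

/-- identity from the plane -/
def toS : ℂ → Surf := fun z => z
/-- identity to the plane -/
def ofS : Surf → ℂ := fun z => z

theorem toS_continuous : Continuous toS := by
  rw [F_quotient.continuous_iff]
  exact FS_lip.continuous

theorem ofS_continuous : Continuous ofS := by
  rw [Metric.continuous_iff]
  intro a ε hε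
  obtain ⟨c, hc, hb⟩ := sd_lower (ofS a)
  refine ⟨c * min 1 ε, by positivity, fun b hba => ?_⟩
  have h1 := hb (ofS b)
  have h2 : c * min 1 (dist (ofS b) (ofS a)) < c * min 1 ε := h1.trans_lt hba
  have h3 := lt_of_mul_lt_mul_left h2 hc.le
  rcases min_lt_iff.1 h3 with h | h
  · exact absurd (h.trans_le (min_le_left _ _)) (lt_irrefl _)
  · exact h.trans_le (min_le_right _ _)

/-- the surface is a plane -/
noncomputable def homeo : Surf ≃ₜ ℂ where
  toFun := ofS
  invFun := toS
  left_inv _ := rfl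
  right_inv _ := rfl
  continuous_toFun := ofS_continuous
  continuous_invFun := toS_continuous

instance : SecondCountableTopology Surf := homeo.secondCountableTopology

theorem locFin : IsLocallyFiniteMeasure (hausdorff2 Surf) := by
  refine ⟨fun a => ?_⟩
  have hK : IsCompact (F ⁻¹' closedBall (ofS a) 1) :=
    F_proper.isCompact_preimage (isCompact_closedBall _ _)
  refine ⟨ofS ⁻¹' closedBall (ofS a) 1,
    ofS_continuous.continuousAt (closedBall_mem_nhds _ zero_lt_one), ?_⟩
  have e : ofS ⁻¹' closedBall (ofS a) 1 = FS '' (F ⁻¹' closedBall (ofS a) 1) :=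
    (image_preimage_eq _ F_surjective).symm
  have hH : (μH[2] : Measure ℂ).IsAddHaarMeasure := by
    have := MeasureTheory.isAddHaarMeasure_hausdorffMeasure (E := ℂ)
    rw [Complex.finrank_real_complex] at this
    exact_mod_cast this
  have h1 : μH[2] (F ⁻¹' closedBall (ofS a) 1) < ⊤ := hK.measure_lt_top
  have h2 := FS_lip.hausdorffMeasure_image_le (d := 2) (by norm_num) (F ⁻¹' closedBall (ofS a) 1)
  rw [e, hausdorff2, Measure.smul_apply, smul_eq_mul]
  refine ENNReal.mul_lt_top ENNReal.ofReal_lt_top (h2.trans_lt ?_)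
  simpa using h1

/-- concatenation of a curve with an extra piece -/
theorem length_step (x : Surf) {p q : ℂ} {L : ℝ} (h : ∀ y ∈ uIcc p.im q.im, wt y ≤ L) :
    (⨅ γ : {γ : Curve Surf // γ.toFun γ.a = x ∧ γ.toFun γ.b = FS q}, γ.1.length) ≤
    (⨅ γ : {γ : Curve Surf // γ.toFun γ.a = x ∧ γ.toFun γ.b = FS p}, γ.1.length) +
      ENNReal.ofReal (L * dist p q) := by
  rw [ENNReal.iInf_add]
  refine le_iInf ?_
  rintro ⟨γ, hγa, hγb⟩
  set σ : ℝ → ℂ := fun t => p + ((t - γ.b : ℝ) : ℂ) * (q - p) with hσ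
  have hσc : Continuous σ := by fun_prop
  have hσ0 : σ γ.b = p := by simp [hσ]
  have hσ1 : σ (γ.b + 1) = q := by simp [hσ]
  set f : ℝ → Surf := fun t => if t ≤ γ.b then γ.toFun t else FS (σ t) with hf
  have hf1 : EqOn f γ.toFun (Icc γ.a γ.b) := fun t ht => if_pos ht.2
  have hf2 : EqOn f (fun t => FS (σ t)) (Icc γ.b (γ.b + 1)) := by
    intro t ht
    rcases ht.1.eq_or_lt with h | h
    · rw [← h]
      simp only [hf, le_refl, if_true]
      rw [hγb, hσ0]
    · exact if_neg (not_le.2 h)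
  have hb1 : γ.b ≤ γ.b + 1 := by linarith
  have hcont : ContinuousOn f (Icc γ.a (γ.b + 1)) := by
    rw [← Icc_union_Icc_eq_Icc γ.hab hb1]
    apply ContinuousOn.union_of_isClosed
    · exact γ.cont.congr hf1
    · exact (FS_lip.continuous.comp hσc).continuousOn.congr hf2
    · exact isClosed_Icc
    · exact isClosed_Icc
  have hL : 0 ≤ L := (wt_pos _).le.trans (h _ left_mem_uIcc)
  have hvar : eVariationOn f (Icc γ.b (γ.b + 1)) ≤ ENNReal.ofReal (L * dist p q) := by
    rw [eVariationOn.congr hf2]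
    have hlip : LipschitzOnWith (Real.toNNReal (L * dist p q)) (fun t => FS (σ t))
        (Icc γ.b (γ.b + 1)) := by
      apply LipschitzOnWith.of_dist_le_mul
      intro s hs t ht
      rw [Real.coe_toNNReal _ (by positivity)]
      have him : ∀ r ∈ Icc γ.b (γ.b + 1), (σ r).im ∈ uIcc p.im q.im := by
        intro r hr
        have : (σ r).im = AffineMap.lineMap p.im q.im (r - γ.b) := by
          simp [hσ, AffineMap.lineMap_apply]; ring
        rw [this, ← segment_eq_uIcc]
        rw [segment_eq_image_lineMap]
        exact ⟨r - γ.b, ⟨by linarith [hr.1], by linarith [hr.2]⟩, rfl⟩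
      have h1 : dist (FS (σ s)) (FS (σ t)) ≤ L * dist (σ s) (σ t) := by
        apply FS_le
        intro y hy
        exact h y (uIcc_subset_uIcc (him s hs) (him t ht) hy)
      refine h1.trans (le_of_eq ?_)
      have : dist (σ s) (σ t) = dist p q * dist s t := by
        rw [dist_eq_norm, dist_eq_norm, Real.dist_eq]
        have : σ s - σ t = ((s - t : ℝ) : ℂ) * (q - p) := by
          simp only [hσ]; push_cast; ring
        rw [this, norm_mul, Complex.norm_real, Real.norm_eq_abs, ← norm_neg (q - p), neg_sub,
          mul_comm]
      rw [this, mul_assoc]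
    have h2 := hlip.comp_eVariationOn_le (g := id) (s := Icc γ.b (γ.b + 1)) (mapsTo_id _)
    have h3 : eVariationOn (id : ℝ → ℝ) (Icc γ.b (γ.b + 1)) ≤ ENNReal.ofReal 1 := by
      have := (monotoneOn_id (s := Icc γ.b (γ.b + 1))).eVariationOn_eq
        (left_mem_Icc.2 hb1) (right_mem_Icc.2 hb1)
      rw [inter_self] at this
      rw [this]
      simp
    refine h2.trans ((mul_le_mul' le_rfl h3).trans (le_of_eq ?_))
    rw [ENNReal.ofReal_one, mul_one]; rfl
  have hadd := eVariationOn.Icc_add_Icc f (s := univ) γ.hab hb1 (mem_univ _)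
  simp only [univ_inter] at hadd
  refine iInf_le_of_le ⟨⟨γ.a, γ.b + 1, γ.hab.trans hb1, f, hcont⟩, ?_, ?_⟩ ?_
  · change f γ.a = x
    rw [hf1 (left_mem_Icc.2 γ.hab), hγa]
  · change f (γ.b + 1) = _
    rw [hf2 (right_mem_Icc.2 hb1)]
    simp only [hσ1]
  · change eVariationOn f (Icc γ.a (γ.b + 1)) ≤ γ.length + _
    rw [← hadd, eVariationOn.congr hf1]
    exact add_le_add le_rfl hvar

theorem lengthSpace : IsLengthSpace Surf := by
  intro x y
  set ℓ : Surf → ℝ≥0∞ := fun b =>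
    ⨅ γ : {γ : Curve Surf // γ.toFun γ.a = x ∧ γ.toFun γ.b = b}, γ.1.length with hℓ
  have hx : ℓ x = 0 := by
    apply le_antisymm _ bot_le
    refine iInf_le_of_le ⟨⟨0, 0, le_rfl, fun _ => x, continuousOn_const⟩, rfl, rfl⟩ ?_
    change eVariationOn (fun _ : ℝ => x) (Icc 0 0) ≤ 0
    simp
  have hstep : ∀ p q : ℂ, ∀ L : ℝ, (∀ y ∈ uIcc p.im q.im, wt y ≤ L) →
      ℓ (FS q) ≤ ℓ (FS p) + ENNReal.ofReal (L * dist p q) := fun p q L h => length_step x h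
  have hfin : ∀ b, ℓ b ≠ ⊤ := by
    intro b
    obtain ⟨p, hp⟩ := FS_surjective x
    obtain ⟨q, hq⟩ := FS_surjective b
    have := hstep p q 1 (fun y _ => wt_le_one y)
    rw [hp, hq, hx, zero_add] at this
    exact ne_top_of_le_ne_top ENNReal.ofReal_ne_top this
  have hadm : Adm fun b => (ℓ (toS b)).toReal := by
    have one : ∀ p q : ℂ, ∀ L : ℝ, (∀ y ∈ uIcc p.im q.im, wt y ≤ L) →
        (ℓ (FS q)).toReal ≤ (ℓ (FS p)).toReal + L * dist p q := by
      intro p q L h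
      have hL : 0 ≤ L := (wt_pos _).le.trans (h _ left_mem_uIcc)
      have := ENNReal.toReal_mono (ENNReal.add_ne_top.2 ⟨hfin _, ENNReal.ofReal_ne_top⟩)
        (hstep p q L h)
      rwa [ENNReal.toReal_add (hfin _) ENNReal.ofReal_ne_top,
        ENNReal.toReal_ofReal (by positivity)] at this
    intro p q L h
    have h1 := one p q L h
    have h2 := one q p L (by rwa [uIcc_comm])
    rw [dist_comm] at h2
    change |(ℓ (FS p)).toReal - (ℓ (FS q)).toReal| ≤ _
    rw [abs_le]
    constructor <;> linarith
  apply le_antisymm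
  · refine le_iInf ?_
    rintro ⟨γ, hγa, hγb⟩
    change _ ≤ γ.length
    rw [← hγa, ← hγb]
    exact eVariationOn.edist_le _ (left_mem_Icc.2 γ.hab) (right_mem_Icc.2 γ.hab)
  · change ℓ y ≤ _
    have h1 := le_sd hadm (ofS x) (ofS y)
    change |(ℓ x).toReal - (ℓ y).toReal| ≤ dist x y at h1
    rw [hx, ENNReal.toReal_zero, zero_sub, abs_neg, abs_of_nonneg ENNReal.toReal_nonneg] at h1
    rw [edist_dist]
    exact (ENNReal.le_ofReal_iff_toReal_le (hfin y) dist_nonneg).2 h1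

end Slit


namespace Slit

theorem null_curve {E : Type*} [MetricSpace E] [MeasurableSpace E] [BorelSpace E]
    {f : ℝ → E} {K : ℝ≥0} {s : Set ℝ} (hf : LipschitzOnWith K f s) : μH[2] (f '' s) = 0 := by
  have h1 := hf.hausdorffMeasure_image_le (d := 2) (by norm_num)
  have h2 : (μH[2] : Measure ℝ) s = 0 := by
    have h3 : dimH s < ((2 : ℝ≥0) : ℝ≥0∞) := by
      refine (dimH_mono (subset_univ s)).trans_lt ?_
      rw [Real.dimH_univ]
      norm_num
    have := hausdorffMeasure_of_dimH_lt h3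
    simpa using this
  rw [h2, mul_zero] at h1
  exact le_antisymm h1 bot_le

theorem vert_isometry (x : ℝ) : Isometry fun y : ℝ => (⟨x, y⟩ : ℂ) := by
  apply Isometry.of_dist_eq
  intro y y'
  rw [Complex.dist_eq_re_im, Real.dist_eq]
  simp [Real.sqrt_sq_eq_abs]

theorem horiz_isometry (y : ℝ) : Isometry fun x : ℝ => (⟨x, y⟩ : ℂ) := by
  apply Isometry.of_dist_eq
  intro x x'
  rw [Complex.dist_eq_re_im, Real.dist_eq]
  simp [Real.sqrt_sq_eq_abs]

theorem S_null : μH[2] S = 0 := by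
  have : S ⊆ ⋃ j : ℕ, ⋃ k : ℤ, ⋃ e ∈ ({1, -1} : Set ℝ),
      (fun y : ℝ => (⟨(k + e / 2) / 2 ^ j, y⟩ : ℂ)) '' univ := by
    rintro z ⟨j, hj, -⟩
    have h2 : (2:ℝ) ^ j ≠ 0 := by positivity
    simp only [mem_iUnion]
    unfold dd at hj
    rcases abs_cases (2 ^ j * z.re - round (2 ^ j * z.re)) with h | h
    · refine ⟨j, round (2 ^ j * z.re), 1, by simp, z.im, mem_univ _, Complex.ext ?_ rfl⟩
      simp only
      field_simp
      linarith
    · refine ⟨j, round (2 ^ j * z.re), -1, by simp, z.im, mem_univ _, Complex.ext ?_ rfl⟩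
      simp only
      field_simp
      linarith
  refine measure_mono_null this ?_
  refine measure_iUnion_null fun j => measure_iUnion_null fun k => ?_
  refine (measure_biUnion_null_iff (by simp : ({1, -1} : Set ℝ).Countable)).2 fun e _ => ?_
  exact null_curve ((vert_isometry _).lipschitz.lipschitzOnWith)

theorem wt_nbhd (t : ℝ) : ∃ ε > 0, ∀ y ∈ ball t ε, wt t / 2 ≤ wt y ∧ wt y ≤ 2 * wt t := by
  have h0 := wt_pos t
  have : ∀ᶠ y in 𝓝 t, wt t / 2 < wt y ∧ wt y < 2 * wt t :=
    (wt_continuous.continuousAt.eventually_const_lt (by linarith)).and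
      (wt_continuous.continuousAt.eventually_lt_const (by linarith))
  obtain ⟨ε, hε, h⟩ := Metric.eventually_nhds_iff_ball.1 this
  exact ⟨ε, hε, fun y hy => ⟨(h y hy).1.le, (h y hy).2.le⟩⟩

theorem uIcc_sub_ball {t ε a b : ℝ} (ha : a ∈ ball t ε) (hb : b ∈ ball t ε) :
    uIcc a b ⊆ ball t ε := by
  rw [← segment_eq_uIcc]
  exact (convex_ball t ε).segment_subset ha hb

theorem h2_qc : WeaklyQC (((16 : ℝ≥0) : ℝ) ^ 2) FS := by
  refine qc_criterion FS FS_lip.continuous (fun z => ENNReal.ofReal (4 * wt z.im)) ?_ ∅ Sᶜ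
    MeasurableSet.empty S_closed.measurableSet.compl 16 (by norm_num) ?_ (by simp) ?_ ?_ ?_
    FS_surjective ?_
  · exact ENNReal.measurable_ofReal.comp
      ((wt_continuous.comp Complex.continuous_im).measurable.const_mul 4)
  · intro a
    obtain ⟨ε, hε, h⟩ := wt_nbhd a.im
    have h0 := wt_pos a.im
    refine ⟨Complex.im ⁻¹' ball a.im ε,
      Complex.continuous_im.continuousAt (ball_mem_nhds _ hε), Real.toNNReal (2 * wt a.im), ?_, ?_⟩
    · apply LipschitzOnWith.of_dist_le_mul
      intro p hp q hq
      rw [Real.coe_toNNReal _ (by positivity)]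
      exact FS_le fun y hy => (h y (uIcc_sub_ball hp hq hy)).2
    · intro x hx
      change ENNReal.ofReal _ ≤ _
      apply ENNReal.ofReal_le_ofReal
      have := (h _ hx).1
      linarith
  · rw [union_empty, compl_compl]
    exact S_null
  · intro p hp q _ h
    exact FS_inj hp h
  · intro a ha
    obtain ⟨ε, hε, h⟩ := wt_nbhd a.im
    have h0 := wt_pos a.im
    obtain ⟨r, hr, hl⟩ := FS_lower ha (m := wt a.im / 2) (by linarith) (by linarith)
    refine ⟨Complex.im ⁻¹' ball a.im ε ∩ ball a r,
      inter_mem (Complex.continuous_im.continuousAt (ball_mem_nhds _ hε)) (ball_mem_nhds _ hr),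
      Real.toNNReal (8 * wt a.im), ?_, ?_⟩
    · rintro x ⟨⟨hx, -⟩, -⟩
      change _ ≤ ENNReal.ofReal _
      apply ENNReal.ofReal_le_ofReal
      have := (h _ hx).2
      linarith
    · rintro x ⟨⟨-, hx⟩, -⟩ y ⟨⟨-, hy⟩, -⟩
      have h1 := hl x hx y hy
      rw [edist_dist, edist_dist]
      change ENNReal.ofReal _ * _ ≤ _
      rw [← ENNReal.ofReal_mul (by positivity),
        show ((16 : ℝ≥0) : ℝ≥0∞) = ENNReal.ofReal 16 by simp, ← ENNReal.ofReal_mul (by norm_num)]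
      apply ENNReal.ofReal_le_ofReal
      linarith
  · intro b
    have e : FS ⁻¹' {b} = (fun y : ℝ => (⟨(ofS b).re, y⟩ : ℂ)) '' {y | G (ofS b).re y = (ofS b).im} := by
      ext z
      constructor
      · intro hz
        have hz' : F z = ofS b := hz
        have h1 : z.re = (ofS b).re := by rw [← hz']; rfl
        refine ⟨z.im, ?_, Complex.ext h1.symm rfl⟩
        rw [mem_setOf_eq, ← h1, ← hz']
        rfl
      · rintro ⟨y, hy, rfl⟩
        change F _ = ofS b
        exact Complex.ext rfl hy
    rw [e]
    refine IsPreconnected.image ?_ _ (vert_isometry _).continuous.continuousOn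
    have : OrdConnected {y | G (ofS b).re y = (ofS b).im} := by
      refine ⟨fun x hx y hy z hz => ?_⟩
      have a1 := G_mono (ofS b).re hz.1
      have a2 := G_mono (ofS b).re hz.2
      rw [mem_setOf_eq] at *
      linarith
    exact this.isPreconnected

end Slit


namespace Slit

noncomputable def cp (s : ℝ) : ℝ := max (-1/2) (min (1/2) s)

theorem cp_le (s : ℝ) : cp s ≤ 1/2 := max_le (by norm_num) (min_le_left _ _)
theorem le_cp (s : ℝ) : -1/2 ≤ cp s := le_max_left _ _
theorem cp_mono {s t : ℝ} (h : s ≤ t) : cp s ≤ cp t := max_le_max le_rfl (min_le_min le_rfl h)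
theorem cp_of_mem {s : ℝ} (h : -1/2 ≤ s) (h' : s ≤ 1/2) : cp s = s := by
  unfold cp; rw [min_eq_right h', max_eq_right h]
theorem cp_of_ge {s : ℝ} (h' : 1/2 ≤ s) : cp s = 1/2 := by
  unfold cp; rw [min_eq_left h']; norm_num
theorem cp_of_le {s : ℝ} (h' : s ≤ -1/2) : cp s = -1/2 := by
  unfold cp; rw [min_eq_right (by linarith), max_eq_left h']

theorem cp_lip {s t : ℝ} (h : s ≤ t) : cp t - cp s ≤ t - s := by
  unfold cp
  rcases max_cases (-1/2) (min (1/2) s) with h1 | h1 <;>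
  rcases max_cases (-1/2) (min (1/2) t) with h2 | h2 <;>
  rcases min_cases (1/2) s with h3 | h3 <;>
  rcases min_cases (1/2) t with h4 | h4 <;> linarith

theorem cp_neg (s : ℝ) : cp (-s) = - cp s := by
  rcases le_total s (-1/2) with h | h
  · rw [cp_of_le h, cp_of_ge (by linarith)]; norm_num
  · rcases le_total s (1/2) with h' | h'
    · rw [cp_of_mem h h', cp_of_mem (by linarith) (by linarith)]
    · rw [cp_of_ge h', cp_of_le (by linarith)]; norm_num

noncomputable def cc (w a : ℝ) : ℝ := round a + cp ((a - round a) / w)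

theorem cc_int {w a : ℝ} (hw : 0 < w) (hw1 : w ≤ 1) (k : ℤ) (h : |a - k| ≤ 1/2) :
    cc w a = k + cp ((a - k) / w) := by
  unfold cc
  rw [abs_le] at h
  rcases lt_or_eq_of_le h.2 with h2 | h2
  · have : round a = k := by
      rw [round_eq, Int.floor_eq_iff]
      constructor <;> linarith [h.1]
    rw [this]
  · have : round a = k + 1 := by
      rw [round_eq, Int.floor_eq_iff]
      push_cast
      constructor <;> linarith [h.1]
    rw [this, h2, cp_of_ge (s := 1/2/w), cp_of_le]
    · push_cast; ring
    · rw [div_le_iff₀ hw]; push_cast; linarith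
    · rw [le_div_iff₀ hw]; linarith

theorem cc_near {w a : ℝ} (hw : 0 < w) (hw1 : w ≤ 1) (k : ℤ) (h : |a - k| ≤ w/2) :
    cc w a = k + (a - k) / w := by
  rw [cc_int hw hw1 k (by linarith)]
  rw [abs_le] at h
  rw [cp_of_mem]
  · rw [le_div_iff₀ hw]; linarith
  · rw [div_le_iff₀ hw]; linarith

theorem cc_mid {w a : ℝ} (hw : 0 < w) (hw1 : w ≤ 1) (k : ℤ) (h : |a - (k + 1/2)| ≤ (1 - w)/2) :
    cc w a = k + 1/2 := by
  rw [abs_le] at h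
  rcases le_total a (k + 1/2) with h2 | h2
  · rw [cc_int hw hw1 k (abs_le.2 ⟨by linarith, by linarith⟩), cp_of_ge]
    rw [le_div_iff₀ hw]; linarith
  · rw [cc_int hw hw1 (k+1) (abs_le.2 ⟨by push_cast; linarith, by push_cast; linarith⟩), cp_of_le]
    · push_cast; ring
    · rw [div_le_iff₀ hw]; push_cast; linarith

theorem cc_one (a : ℝ) : cc 1 a = a := by
  rw [cc_near one_pos le_rfl (round a)]
  · ring
  · have := abs_sub_round a; linarith

theorem cp_aux {w s : ℝ} (hw : 0 < w) (hw1 : w ≤ 1) (h : |s| ≤ 1/2) :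
    1/2 - cp (s / w) ≤ (1/2 - s) / w := by
  rw [abs_le] at h
  rw [le_div_iff₀ hw]
  have hs : s / w * w = s := by field_simp
  rcases le_total (s / w) (-1/2) with h1 | h1
  · rw [cp_of_le h1]
    nlinarith
  · rcases le_total (s / w) (1/2) with h2 | h2
    · rw [cp_of_mem h1 h2]
      nlinarith
    · rw [cp_of_ge h2]
      nlinarith

theorem cc_lip {w a b : ℝ} (hw : 0 < w) (hw1 : w ≤ 1) (h : a ≤ b) :
    0 ≤ cc w b - cc w a ∧ cc w b - cc w a ≤ (b - a) / w := by
  have ha := abs_sub_round a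
  have hb := abs_sub_round b
  by_cases he : round a = round b
  · unfold cc
    rw [he]
    have h1 : (a - round b) / w ≤ (b - round b) / w := by gcongr
    have h2 := cp_mono h1
    have h3 := cp_lip h1
    refine ⟨by linarith, ?_⟩
    have : (b - a) / w = (b - round b) / w - (a - round b) / w := by ring
    linarith
  · have h1 : round a ≤ round b := by
      rw [round_eq, round_eq]; exact Int.floor_mono (by linarith)
    have h2 : round a + 1 ≤ round b := by omega
    have h3 : (round a : ℝ) + 1 ≤ round b := by exact_mod_cast h2
    unfold cc
    have a1 := cp_le ((a - round a) / w)
    have a2 := le_cp ((b - round b) / w)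
    refine ⟨by linarith, ?_⟩
    have a3 := cp_aux hw hw1 ha
    have a4 := cp_aux hw hw1 (s := -(b - round b)) (by rwa [abs_neg])
    rw [neg_div, cp_neg] at a4
    have a5 : (round b : ℝ) - round a - 1 ≤ (round b - round a - 1) / w := by
      rw [le_div_iff₀ hw]; nlinarith
    have : (b - a) / w = (1 / 2 - (a - ↑(round a))) / w + (1 / 2 - -(b - ↑(round b))) / w
      + (round b - round a - 1) / w := by ring
    linarith

theorem cp_exp {s d e : ℝ} (h : |s| ≤ 1/2) (hde : d ≤ e) :
    |cp (s / Real.exp (-d)) - cp (s / Real.exp (-e))| ≤ 1/2 * (e - d) := by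
  have key : ∀ s : ℝ, 0 ≤ s → |cp (s / Real.exp (-d)) - cp (s / Real.exp (-e))| ≤ 1/2 * (e - d) := by
    intro s hs
    have h1 : s / Real.exp (-d) ≤ s / Real.exp (-e) := by gcongr
    have h2 := cp_mono h1
    rw [abs_sub_comm, abs_of_nonneg (by linarith)]
    have h3 : s / Real.exp (-d) = s / Real.exp (-e) * Real.exp (-(e - d)) := by
      rw [div_mul_eq_mul_div, div_eq_div_iff (Real.exp_ne_zero _) (Real.exp_ne_zero _), mul_assoc,
        ← Real.exp_add]
      ring_nf
    have h4 : 1 - (e - d) ≤ Real.exp (-(e - d)) := by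
      have := Real.add_one_le_exp (-(e - d)); linarith
    have h4' : Real.exp (-(e - d)) ≤ 1 := Real.exp_le_one_iff.2 (by linarith)
    have p0 : 0 ≤ s / Real.exp (-e) := by positivity
    set y := s / Real.exp (-e)
    set z := s / Real.exp (-d)
    have p1 : 0 ≤ z := by positivity
    rcases le_total z (1/2) with h5 | h5
    · rw [cp_of_mem (by linarith) h5]
      rcases le_total y (1/2) with h6 | h6
      · rw [cp_of_mem (by linarith) h6]
        rw [h3]
        nlinarith
      · rw [cp_of_ge h6]
        have : 1/2 * Real.exp (-(e - d)) ≤ z := by rw [h3]; gcongr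
        linarith
    · rw [cp_of_ge h5, cp_of_ge (h5.trans h1)]
      linarith
  rcases le_total 0 s with hs | hs
  · exact key s hs
  · have := key (-s) (by linarith)
    rw [neg_div, neg_div, cp_neg, cp_neg] at this
    rw [← abs_neg]
    convert this using 2
    ring

theorem cc_exp {a d e : ℝ} : |cc (Real.exp (-d)) a - cc (Real.exp (-e)) a| ≤ 1/2 * |e - d| := by
  unfold cc
  rw [add_sub_add_left_eq_sub]
  rcases le_total d e with h | h
  · rw [abs_of_nonneg (by linarith : 0 ≤ e - d)]
    exact cp_exp (abs_sub_round a) h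
  · rw [abs_of_nonpos (by linarith : e - d ≤ 0), abs_sub_comm, neg_sub]
    exact cp_exp (abs_sub_round a) h

noncomputable def XX (u t : ℝ) : ℝ := cc (wt t) (2 ^ ⌊t⌋₊ * u) / 2 ^ ⌊t⌋₊

theorem XX_of_wt {u t : ℝ} (h : wt t = 1) : XX u t = u := by
  unfold XX
  rw [h, cc_one]
  field_simp

theorem XX_band {t : ℝ} (u : ℝ) (n : ℕ) (h1 : n ≤ t) (h2 : t ≤ n + 1) :
    XX u t = cc (wt t) (2 ^ n * u) / 2 ^ n := by
  rcases h2.lt_or_eq with h | h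
  · have : ⌊t⌋₊ = n := (Nat.floor_eq_iff (by have : (0:ℝ) ≤ n := by positivity
                                             linarith)).2 ⟨h1, h⟩
    unfold XX
    rw [this]
  · have hw : wt t = 1 := by
      have := wt_nat (n + 1)
      push_cast at this
      rw [h, this]
    rw [XX_of_wt hw, hw, cc_one]
    field_simp

theorem XX_mono (t : ℝ) : Monotone fun u => XX u t := by
  intro a b h
  have := (cc_lip (wt_pos t) (wt_le_one t)
    (by gcongr : (2:ℝ) ^ ⌊t⌋₊ * a ≤ 2 ^ ⌊t⌋₊ * b)).1
  unfold XX
  simp only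
  gcongr
  linarith

theorem XX_lipu (a b t : ℝ) : wt t * |XX a t - XX b t| ≤ |a - b| := by
  have h0 := wt_pos t
  have key : ∀ a b, a ≤ b → wt t * |XX a t - XX b t| ≤ |a - b| := by
    intro a b h
    have h1 := (cc_lip (wt_pos t) (wt_le_one t)
      (by gcongr : (2:ℝ) ^ ⌊t⌋₊ * a ≤ 2 ^ ⌊t⌋₊ * b)).2
    have h2 : XX a t ≤ XX b t := XX_mono t h
    rw [abs_sub_comm, abs_of_nonneg (by linarith), abs_sub_comm, abs_of_nonneg (by linarith)]
    unfold XX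
    rw [← sub_div, ← mul_div_assoc, div_le_iff₀ (by positivity)]
    rw [le_div_iff₀ h0] at h1
    linarith
  rcases le_total a b with h | h
  · exact key a b h
  · have := key b a h
    rwa [abs_sub_comm, abs_sub_comm b] at this

theorem del_band_lip {n : ℕ} {s t : ℝ} (h1 : n ≤ s) (h2 : s ≤ t) (h3 : t ≤ n + 1) :
    |del s - del t| ≤ 2 ^ n * (t - s) := by
  rw [del_band n h1 (h2.trans h3), del_band n (h1.trans h2) h3, ← mul_sub, abs_mul,
    abs_of_nonneg (by positivity : (0:ℝ) ≤ 2 ^ n)]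
  gcongr
  rw [abs_le]
  constructor
  · rcases min_cases (s - n) (n + 1 - s) with h | h <;>
    rcases min_cases (t - n) (n + 1 - t) with h' | h' <;> linarith
  · rcases min_cases (s - n) (n + 1 - s) with h | h <;>
    rcases min_cases (t - n) (n + 1 - t) with h' | h' <;> linarith

theorem glue_all {f : ℝ → ℝ} {L : ℝ} (hL : 0 ≤ L) (h0 : ∀ t ≤ 0, f t = 0)
    (h1 : ∀ n : ℕ, ∀ s t : ℝ, n ≤ s → s ≤ t → t ≤ n + 1 → |f s - f t| ≤ L * (t - s)) (s t : ℝ) :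
    |f s - f t| ≤ L * |s - t| := by
  obtain ⟨N, hN⟩ := exists_nat_ge (max s t)
  exact glue hL N h0 (fun n _ => h1 n) s t ((le_max_left _ _).trans hN) ((le_max_right _ _).trans hN)

theorem XX_lipt (u s t : ℝ) : |XX u s - XX u t| ≤ |s - t| := by
  have := glue_all (f := fun t => XX u t - u) (L := 1) (by norm_num)
    (fun t ht => by rw [XX_of_wt (wt_of_nonpos ht), sub_self]) ?_ s t
  · simpa using this
  intro n s t h1 h2 h3
  simp only [sub_sub_sub_cancel_right]
  rw [XX_band u n h1 (h2.trans h3), XX_band u n (h1.trans h2) h3, ← sub_div, abs_div,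
    abs_of_nonneg (by positivity : (0:ℝ) ≤ 2 ^ n), div_le_iff₀ (by positivity)]
  have a1 := cc_exp (a := 2 ^ n * u) (d := del s) (e := del t)
  have a2 := del_band_lip h1 h2 h3
  rw [abs_sub_comm] at a2
  unfold wt
  have : 0 ≤ (2:ℝ) ^ n * (t - s) := mul_nonneg (by positivity) (by linarith)
  linarith

noncomputable def ff (x t : ℝ) : ℝ :=
  (round (2 ^ ⌊t⌋₊ * x) + (2 ^ ⌊t⌋₊ * x - round (2 ^ ⌊t⌋₊ * x)) * wt t) / 2 ^ ⌊t⌋₊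

theorem XX_ff (x t : ℝ) : XX (ff x t) t = x := by
  have h0 := wt_pos t
  unfold XX ff
  rw [mul_div_cancel₀ _ (by positivity), cc_near h0 (wt_le_one t) (round (2 ^ ⌊t⌋₊ * x))]
  · field_simp
    ring
  · rw [add_sub_cancel_left, abs_mul, abs_of_pos h0]
    have := abs_sub_round (2 ^ ⌊t⌋₊ * x)
    nlinarith

theorem ff_of_wt {u t : ℝ} (h : wt t = 1) : ff u t = u := by
  unfold ff
  rw [h, mul_one]
  field_simp
  ring

theorem ff_band {t : ℝ} (x : ℝ) (n : ℕ) (h1 : n ≤ t) (h2 : t ≤ n + 1) :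
    ff x t = (round (2 ^ n * x) + (2 ^ n * x - round (2 ^ n * x)) * wt t) / 2 ^ n := by
  rcases h2.lt_or_eq with h | h
  · have : ⌊t⌋₊ = n := (Nat.floor_eq_iff (by have : (0:ℝ) ≤ n := by positivity
                                             linarith)).2 ⟨h1, h⟩
    unfold ff
    rw [this]
  · have hw : wt t = 1 := by
      have := wt_nat (n + 1)
      push_cast at this
      rw [h, this]
    rw [ff_of_wt hw, hw, mul_one]
    field_simp
    ring

/-- comparison of weights in terms of the exponents -/
theorem wt_sub {s t W : ℝ} (hs : wt s ≤ W) (ht : wt t ≤ W) : |wt s - wt t| ≤ W * |del s - del t| := by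
  have key : ∀ s t, wt s ≤ W → wt t ≤ W → del s ≤ del t → |wt s - wt t| ≤ W * |del s - del t| := by
    intro s t hs ht h
    have h1 : wt t = wt s * Real.exp (del s - del t) := by
      unfold wt; rw [← Real.exp_add]; ring_nf
    have h2 := Real.add_one_le_exp (del s - del t)
    have h3 : Real.exp (del s - del t) ≤ 1 := Real.exp_le_one_iff.2 (by linarith)
    have h0 := wt_pos s
    rw [abs_sub_comm (del s), abs_of_nonneg (by linarith : 0 ≤ del t - del s), abs_of_nonneg]
    · rw [h1]; nlinarith
    · rw [h1]; nlinarith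
  rcases le_total (del s) (del t) with h | h
  · exact key s t hs ht h
  · have := key t s ht hs h
    rwa [abs_sub_comm, abs_sub_comm (del t)] at this

theorem ff_lip (x s t : ℝ) : |ff x s - ff x t| ≤ |s - t| := by
  have := glue_all (f := fun t => ff x t - x) (L := 1) (by norm_num)
    (fun t ht => by rw [ff_of_wt (wt_of_nonpos ht), sub_self]) ?_ s t
  · simpa using this
  intro n s t h1 h2 h3
  simp only [sub_sub_sub_cancel_right]
  rw [ff_band x n h1 (h2.trans h3), ff_band x n (h1.trans h2) h3, ← sub_div, abs_div,
    abs_of_nonneg (by positivity : (0:ℝ) ≤ 2 ^ n), div_le_iff₀ (by positivity),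
    add_sub_add_left_eq_sub, ← mul_sub, abs_mul]
  have a1 := wt_sub (wt_le_one s) (wt_le_one t)
  have a2 := del_band_lip h1 h2 h3
  have a3 := abs_sub_round (2 ^ n * x)
  have a4 := abs_nonneg (wt s - wt t)
  nlinarith

theorem ff_continuous (x : ℝ) : Continuous (ff x) := by
  have : LipschitzWith 1 (ff x) := LipschitzWith.of_dist_le_mul fun s t => by
    simpa [Real.dist_eq] using ff_lip x s t
  exact this.continuous

theorem G_slit {n : ℕ} {x : ℝ} (h : dd n x = 0) {s t : ℝ} (h1 : n ≤ s) (h2 : s ≤ t)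
    (h3 : t ≤ n + 1) : G x s = G x t := by
  have hn : (0:ℝ) ≤ n := Nat.cast_nonneg n
  obtain ⟨N, hN⟩ := exists_nat_ge t
  rw [G_eq N hN, G_eq N (h2.trans hN)]
  have e := Gn_sub N x s t
  have e1 : ∑ j ∈ Finset.range N, dd j x * (cl (t - j) - cl (s - j)) = 0 := by
    apply Finset.sum_eq_zero
    intro j _
    rcases lt_trichotomy j n with hj | hj | hj
    · have : (j:ℝ) + 1 ≤ n := by exact_mod_cast hj
      rw [cl_of_one (by linarith), cl_of_one (by linarith), sub_self, mul_zero]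
    · rw [hj, h, zero_mul]
    · have : (n:ℝ) + 1 ≤ j := by exact_mod_cast hj
      rw [cl_of_nonpos (by linarith), cl_of_nonpos (by linarith), sub_self, mul_zero]
  rw [e1, min_eq_right (by linarith), min_eq_right (by linarith)] at e
  linarith

theorem FS_slit {n : ℕ} {x : ℝ} (h : dd n x = 0) {s t : ℝ} (h1 : n ≤ s) (h1' : s ≤ n + 1)
    (h2 : n ≤ t) (h3 : t ≤ n + 1) : FS ⟨x, s⟩ = FS ⟨x, t⟩ := by
  change F ⟨x, s⟩ = F ⟨x, t⟩
  unfold F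
  refine Complex.ext rfl ?_
  change G x s = G x t
  rcases le_total s t with hh | hh
  · exact G_slit h h1 hh h3
  · exact (G_slit h h2 hh h1').symm

/-! The vertical coordinate. -/

noncomputable def psi (y : ℝ) : ℝ := ∫ s in (0:ℝ)..y, wt s

theorem wt_ii (a b : ℝ) : IntervalIntegrable wt volume a b := wt_continuous.intervalIntegrable a b

theorem psi_sub (a b : ℝ) : psi b - psi a = ∫ s in a..b, wt s :=
  intervalIntegral.integral_interval_sub_left (wt_ii _ _) (wt_ii _ _)

theorem psi_bounds {a b m M : ℝ} (h : a ≤ b) (h1 : ∀ s ∈ Icc a b, m ≤ wt s ∧ wt s ≤ M) :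
    m * (b - a) ≤ psi b - psi a ∧ psi b - psi a ≤ M * (b - a) := by
  rw [psi_sub]
  constructor
  · have := intervalIntegral.integral_mono_on h (intervalIntegrable_const (c := m)) (wt_ii a b)
      (fun s hs => (h1 s hs).1)
    rw [intervalIntegral.integral_const, smul_eq_mul] at this
    linarith
  · have := intervalIntegral.integral_mono_on h (wt_ii a b) (intervalIntegrable_const (c := M)) 
      (fun s hs => (h1 s hs).2)
    rw [intervalIntegral.integral_const, smul_eq_mul] at this
    linarith

theorem psi_bounds' {a b m M : ℝ} (h1 : ∀ s ∈ uIcc a b, m ≤ wt s ∧ wt s ≤ M) :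
    m * |a - b| ≤ |psi a - psi b| ∧ |psi a - psi b| ≤ M * |a - b| := by
  have key : ∀ a b, a ≤ b → (∀ s ∈ uIcc a b, m ≤ wt s ∧ wt s ≤ M) →
      m * |a - b| ≤ |psi a - psi b| ∧ |psi a - psi b| ≤ M * |a - b| := by
    intro a b h h1
    rw [uIcc_of_le h] at h1
    have := psi_bounds h h1
    have h0 := (psi_bounds (m := 0) (M := 1) h fun s _ => ⟨(wt_pos s).le, wt_le_one s⟩).1
    rw [abs_sub_comm a, abs_of_nonneg (by linarith : 0 ≤ b - a), abs_sub_comm,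
      abs_of_nonneg (by linarith)]
    exact this
  rcases le_total a b with h | h
  · exact key a b h h1
  · rw [abs_sub_comm, abs_sub_comm (psi a)]
    exact key b a h (by rwa [uIcc_comm])

theorem psi_lip : LipschitzWith 1 psi := LipschitzWith.of_dist_le_mul fun a b => by
  rw [Real.dist_eq, Real.dist_eq, NNReal.coe_one]
  exact (psi_bounds' (m := 0) fun s _ => ⟨(wt_pos s).le, wt_le_one s⟩).2

theorem psi_strictMono : StrictMono psi := by
  intro a b h
  have : 0 < ∫ s in a..b, wt s :=
    intervalIntegral.intervalIntegral_pos_of_pos (wt_ii a b) wt_pos h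
  rw [← psi_sub] at this
  linarith

theorem psi_of_nonpos {y : ℝ} (h : y ≤ 0) : psi y = y := by
  have := psi_bounds (m := 1) (M := 1) h fun s hs => by rw [wt_of_nonpos hs.2]; simp
  have h0 : psi 0 = 0 := intervalIntegral.integral_same
  rw [h0] at this
  linarith [this.1, this.2]

theorem exp_int {c L : ℝ} (hc : 0 < c) (hL : 0 ≤ L) :
    ∫ s in (0:ℝ)..L, Real.exp (-(c * s)) ≤ 1 / c := by
  have h1 : ∀ s ∈ uIcc 0 L, HasDerivAt (fun s => - Real.exp (-(c * s)) / c) (Real.exp (-(c * s))) s := by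
    intro s _
    have : HasDerivAt (fun s => -(c * s)) (-(c * 1)) s := ((hasDerivAt_id s).const_mul c).neg
    have := (this.exp.neg.div_const c)
    refine this.congr_deriv ?_
    field_simp
  rw [intervalIntegral.integral_eq_sub_of_hasDerivAt h1 (by
    apply Continuous.intervalIntegrable; fun_prop)]
  have := Real.exp_pos (-(c * L))
  rw [← sub_div]
  gcongr
  simp
  linarith

theorem psi_band (n : ℕ) : psi (n + 1) - psi n ≤ 2 / 2 ^ n := by
  have hc : (0:ℝ) < 2 ^ n := by positivity
  rw [psi_sub]
  have i1 : IntervalIntegrable (fun s : ℝ => Real.exp (-(2 ^ n * (s - n)))) volume n (n + 1) := by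
    apply Continuous.intervalIntegrable; fun_prop
  have i2 : IntervalIntegrable (fun s : ℝ => Real.exp (-(2 ^ n * (n + 1 - s)))) volume n (n + 1) := by
    apply Continuous.intervalIntegrable; fun_prop
  have h1 : ∫ s in (n:ℝ)..(n+1), wt s ≤ ∫ s in (n:ℝ)..(n+1),
      (Real.exp (-(2 ^ n * (s - n))) + Real.exp (-(2 ^ n * (n + 1 - s)))) := by
    refine intervalIntegral.integral_mono_on (by linarith) (wt_ii _ _) (i1.add i2) fun s hs => ?_
    have a1 := Real.exp_pos (-(2 ^ n * (s - n)))
    have a2 := Real.exp_pos (-(2 ^ n * (n + 1 - s)))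
    unfold wt
    rw [del_band n hs.1 hs.2]
    rcases min_cases (s - n) (n + 1 - s) with h | h <;> rw [h.1] <;> linarith
  rw [intervalIntegral.integral_add i1 i2] at h1
  have e1 : ∫ s in (n:ℝ)..(n+1), Real.exp (-(2 ^ n * (s - n))) ≤ 1 / 2 ^ n := by
    rw [intervalIntegral.integral_comp_sub_right (fun s => Real.exp (-(2 ^ n * s))) (n:ℝ)]
    simp only [sub_self, add_sub_cancel_left]
    exact exp_int hc (by norm_num)
  have e2 : ∫ s in (n:ℝ)..(n+1), Real.exp (-(2 ^ n * (n + 1 - s))) ≤ 1 / 2 ^ n := by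
    rw [intervalIntegral.integral_comp_sub_left (fun s => Real.exp (-(2 ^ n * s))) ((n:ℝ) + 1)]
    simp only [sub_self, add_sub_cancel_left]
    exact exp_int hc (by norm_num)
  have : (2:ℝ) / 2 ^ n = 1 / 2 ^ n + 1 / 2 ^ n := by ring
  linarith

theorem psi_nat (n : ℕ) : psi n ≤ 4 - 4 / 2 ^ n := by
  induction n with
  | zero =>
    have := psi_of_nonpos le_rfl
    simp [this]
  | succ n ih =>
    have := psi_band n
    push_cast
    have e : (4:ℝ) / 2 ^ (n + 1) = 4 / 2 ^ n - 2 / 2 ^ n := by rw [pow_succ]; field_simp; norm_num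
    linarith

theorem psi_bdd : BddAbove (range psi) := by
  refine ⟨4, ?_⟩
  rintro _ ⟨y, rfl⟩
  obtain ⟨N, hN⟩ := exists_nat_ge y
  have h1 := psi_strictMono.monotone hN
  have h2 := psi_nat N
  have : (0:ℝ) ≤ 4 / 2 ^ N := by positivity
  linarith

noncomputable def VV : ℝ := sSup (range psi)

theorem psi_lt (y : ℝ) : psi y < VV :=
  (psi_strictMono (lt_add_one y)).trans_le (le_csSup psi_bdd (mem_range_self _))

theorem psi_surj {v : ℝ} (h : v < VV) : ∃ t, psi t = v := by
  obtain ⟨_, ⟨y, rfl⟩, hy⟩ := exists_lt_of_lt_csSup (range_nonempty psi) h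
  have h1 : psi (min v 0) ≤ v := by
    rw [psi_of_nonpos (min_le_right _ _)]; exact min_le_left _ _
  exact mem_range_of_exists_le_of_exists_ge psi_lip.continuous ⟨_, h1⟩ ⟨_, hy.le⟩

end Slit


namespace Slit

abbrev HH : Type := {z : ℂ // z.im < VV}

noncomputable def TT (z : HH) : ℝ := (psi_surj z.2).choose

theorem psi_TT (z : HH) : psi (TT z) = z.1.im := (psi_surj z.2).choose_spec

theorem TT_continuous : Continuous TT := by
  have him : Continuous fun z : HH => z.1.im := Complex.continuous_im.comp continuous_subtype_val
  rw [continuous_iff_continuousAt]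
  intro z
  refine tendsto_order.2 ⟨fun a ha => ?_, fun a ha => ?_⟩
  · have : psi a < z.1.im := by rw [← psi_TT]; exact psi_strictMono ha
    filter_upwards [him.continuousAt.eventually_const_lt this] with y hy
    rw [← psi_TT] at hy
    exact psi_strictMono.lt_iff_lt.1 hy
  · have : z.1.im < psi a := by rw [← psi_TT]; exact psi_strictMono ha
    filter_upwards [him.continuousAt.eventually_lt_const this] with y hy
    rw [← psi_TT] at hy
    exact psi_strictMono.lt_iff_lt.1 hy

noncomputable def mk (p : ℝ × ℝ) : HH := ⟨⟨p.1, psi p.2⟩, psi_lt _⟩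

theorem TT_mk (p : ℝ × ℝ) : TT (mk p) = p.2 := psi_strictMono.injective (psi_TT (mk p))

theorem mk_eq (z : HH) : mk (z.1.re, TT z) = z := Subtype.ext (Complex.ext rfl (psi_TT z))

theorem mk_continuous : Continuous mk := by
  apply Continuous.subtype_mk
  have : (fun p : ℝ × ℝ => (⟨p.1, psi p.2⟩ : ℂ)) = fun p => (p.1 : ℂ) + (psi p.2 : ℂ) * Complex.I := by
    ext p
    exact Complex.mk_eq_add_mul_I _ _
  rw [this]
  have := psi_lip.continuous
  fun_prop

noncomputable def QQ (z : HH) : ℂ := ⟨XX z.1.re (TT z), TT z⟩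

noncomputable def hH (z : HH) : Surf := FS (QQ z)

theorem dist_mk_le (a b c d : ℝ) : dist (⟨a, b⟩ : ℂ) ⟨c, d⟩ ≤ |a - c| + |b - d| := by
  rw [Complex.dist_eq]
  exact (Complex.norm_le_abs_re_add_abs_im _)

theorem abs_re_le_dist (z w : ℂ) : |z.re - w.re| ≤ dist z w := by
  rw [Complex.dist_eq]; exact Complex.abs_re_le_norm (z - w)
theorem abs_im_le_dist (z w : ℂ) : |z.im - w.im| ≤ dist z w := by
  rw [Complex.dist_eq]; exact Complex.abs_im_le_norm (z - w)

theorem hH_lip (a : HH) : ∃ U ∈ 𝓝 a, LipschitzOnWith 9 hH U := by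
  obtain ⟨ε, hε, h⟩ := wt_nbhd (TT a)
  have h0 := wt_pos (TT a)
  refine ⟨TT ⁻¹' ball (TT a) ε, TT_continuous.continuousAt (ball_mem_nhds _ hε), ?_⟩
  apply LipschitzOnWith.of_dist_le_mul
  intro p hp q hq
  have hsub := uIcc_sub_ball hp hq
  have hp1 := (psi_bounds' fun s hs => h s (hsub hs)).1
  rw [psi_TT, psi_TT] at hp1
  have d1 : dist (FS ⟨XX p.1.re (TT p), TT p⟩) (FS ⟨XX q.1.re (TT p), TT p⟩) ≤ |p.1.re - q.1.re| := by
    refine (FS_le (L := wt (TT p)) ?_).trans ?_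
    · intro y hy
      simp only [uIcc_self, mem_singleton_iff] at hy
      rw [hy]
    · have := XX_lipu p.1.re q.1.re (TT p)
      refine le_trans ?_ this
      refine mul_le_mul_of_nonneg_left ?_ (wt_pos _).le
      simpa using dist_mk_le (XX p.1.re (TT p)) (TT p) (XX q.1.re (TT p)) (TT p)
  have d2 : dist (FS ⟨XX q.1.re (TT p), TT p⟩) (FS ⟨XX q.1.re (TT q), TT q⟩) ≤
      2 * wt (TT a) * (2 * |TT p - TT q|) := by
    refine (FS_le (L := 2 * wt (TT a)) fun y hy => (h y (hsub hy)).2).trans ?_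
    gcongr
    have := dist_mk_le (XX q.1.re (TT p)) (TT p) (XX q.1.re (TT q)) (TT q)
    have := XX_lipt q.1.re (TT p) (TT q)
    linarith
  have d3 := dist_triangle (FS ⟨XX p.1.re (TT p), TT p⟩) (FS ⟨XX q.1.re (TT p), TT p⟩)
    (FS ⟨XX q.1.re (TT q), TT q⟩)
  have e1 := abs_re_le_dist p.1 q.1
  have e2 := abs_im_le_dist p.1 q.1
  change dist (FS ⟨XX p.1.re (TT p), TT p⟩) (FS ⟨XX q.1.re (TT q), TT q⟩) ≤ 9 * dist p.1 q.1
  linarith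

/-- open cells mapped injectively -/
def cellA (n : ℕ) (k : ℤ) : Set HH :=
  {z | (n < TT z ∧ TT z < n + 1) ∧ |2 ^ n * z.1.re - k| < wt (TT z) / 2}

/-- open cells collapsed to points -/
def cellO (n : ℕ) (k : ℤ) : Set HH :=
  {z | (n < TT z ∧ TT z < n + 1) ∧ |2 ^ n * z.1.re - (k + 1/2)| < (1 - wt (TT z)) / 2}

def cellN : Set HH := {z | TT z < 0}

theorem wT_continuous : Continuous fun z => wt (TT z) := wt_continuous.comp TT_continuous
theorem re_continuous : Continuous fun z : HH => z.1.re :=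
  Complex.continuous_re.comp continuous_subtype_val

theorem cellA_open (n k) : IsOpen (cellA n k) := by
  have h1 := TT_continuous
  have h2 := wT_continuous
  have h3 := re_continuous
  have h4 : IsOpen {z : HH | |2 ^ n * z.1.re - k| < wt (TT z) / 2} :=
    isOpen_lt (by fun_prop) (by fun_prop)
  exact ((isOpen_lt continuous_const h1).inter (isOpen_lt h1 continuous_const)).inter h4

theorem cellO_open (n k) : IsOpen (cellO n k) := by
  have h1 := TT_continuous
  have h2 := wT_continuous
  have h3 := re_continuous
  have h4 : IsOpen {z : HH | |2 ^ n * z.1.re - (k + 1/2)| < (1 - wt (TT z)) / 2} :=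
    isOpen_lt (by fun_prop) (by fun_prop)
  exact ((isOpen_lt continuous_const h1).inter (isOpen_lt h1 continuous_const)).inter h4

theorem cellN_open : IsOpen cellN := isOpen_lt TT_continuous continuous_const

theorem cellO_const {n k} {z w : HH} (hz : z ∈ cellO n k) (hw : w ∈ cellO n k) : hH z = hH w := by
  have key : ∀ z ∈ cellO n k, XX z.1.re (TT z) = (k + 1/2) / 2 ^ n := by
    rintro z ⟨⟨h1, h2⟩, h3⟩
    rw [XX_band _ n h1.le h2.le, cc_mid (wt_pos _) (wt_le_one _) k h3.le]
  unfold hH QQ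
  rw [key z hz, key w hw]
  refine FS_slit (n := n) ?_ hz.1.1.le hz.1.2.le hw.1.1.le hw.1.2.le
  unfold dd
  rw [mul_div_cancel₀ _ (by positivity)]
  have : round ((k:ℝ) + 1/2) = k + 1 := by
    rw [round_eq, Int.floor_eq_iff]
    push_cast
    constructor <;> linarith
  rw [this]
  push_cast
  rw [show (k:ℝ) + 1/2 - (k + 1) = -(1/2) by ring, abs_neg, abs_of_pos (by norm_num)]
  norm_num

theorem cellA_X {n k} {z : HH} (hz : z ∈ cellA n k) :
    |2 ^ n * XX z.1.re (TT z) - k| < 1/2 ∧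
    z.1.re = (k + (2 ^ n * XX z.1.re (TT z) - k) * wt (TT z)) / 2 ^ n := by
  obtain ⟨⟨h1, h2⟩, h3⟩ := hz
  have h0 := wt_pos (TT z)
  have e : 2 ^ n * XX z.1.re (TT z) - k = (2 ^ n * z.1.re - k) / wt (TT z) := by
    rw [XX_band _ n h1.le h2.le, cc_near (wt_pos _) (wt_le_one _) k h3.le,
      mul_div_cancel₀ _ (by positivity)]
    ring
  rw [e]
  constructor
  · rw [abs_div, abs_of_pos h0, div_lt_iff₀ h0]
    linarith
  · field_simp
    ring

theorem cellA_S {n k} {z : HH} (hz : z ∈ cellA n k) : QQ z ∉ S := by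
  rintro ⟨j, h1, h2, h3⟩
  change (j:ℝ) ≤ TT z at h2
  change TT z ≤ (j:ℝ) + 1 at h3
  change dd j (XX z.1.re (TT z)) = 0 at h1
  have a1 := hz.1.1
  have a2 := hz.1.2
  have b1 : (j:ℝ) < n + 1 := by linarith
  have b2 : (n:ℝ) < j + 1 := by linarith
  have b1' : j < n + 1 := by exact_mod_cast b1
  have b2' : n < j + 1 := by exact_mod_cast b2
  obtain rfl : j = n := by omega
  have h4 := (cellA_X hz).1
  have : round (2 ^ j * XX z.1.re (TT z)) = k := by
    rw [abs_lt] at h4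
    rw [round_eq, Int.floor_eq_iff]
    constructor <;> linarith
  unfold dd at h1
  rw [this] at h1
  linarith

theorem cellN_S {z : HH} (hz : z ∈ cellN) : QQ z ∉ S := by
  rintro ⟨j, h1, h2, h3⟩
  change (j:ℝ) ≤ TT z at h2
  have : (0:ℝ) ≤ j := Nat.cast_nonneg j
  have : TT z < 0 := hz
  linarith

def AA : Set HH := cellN ∪ ⋃ n : ℕ, ⋃ k : ℤ, cellA n k
def OO : Set HH := ⋃ n : ℕ, ⋃ k : ℤ, cellO n k

theorem AA_S {z : HH} (hz : z ∈ AA) : QQ z ∉ S := by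
  rcases hz with hz | hz
  · exact cellN_S hz
  · simp only [mem_iUnion] at hz
    obtain ⟨n, k, hz⟩ := hz
    exact cellA_S hz

theorem AA_open : IsOpen AA := cellN_open.union (isOpen_iUnion fun n => isOpen_iUnion fun k => cellA_open n k)
theorem OO_open : IsOpen OO := isOpen_iUnion fun n => isOpen_iUnion fun k => cellO_open n k

theorem cellN_X {z : HH} (hz : z ∈ cellN) : XX z.1.re (TT z) = z.1.re :=
  XX_of_wt (wt_of_nonpos (le_of_lt hz))

theorem AA_X {z : HH} (hz : z ∈ AA) : ff (XX z.1.re (TT z)) (TT z) = z.1.re := by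
  rcases hz with hz | hz
  · rw [cellN_X hz, ff_of_wt (wt_of_nonpos (le_of_lt hz))]
  · simp only [mem_iUnion] at hz
    obtain ⟨n, k, hz⟩ := hz
    rw [ff_band _ n hz.1.1.le hz.1.2.le]
    have h4 := cellA_X hz
    have : round (2 ^ n * XX z.1.re (TT z)) = k := by
      have := abs_lt.1 h4.1
      rw [round_eq, Int.floor_eq_iff]
      constructor <;> linarith
    rw [this]
    exact h4.2.symm

theorem hH_injOn : InjOn hH AA := by
  intro z hz w hw h
  have hq := FS_inj (AA_S hz) h
  have e1 : XX z.1.re (TT z) = XX w.1.re (TT w) := congrArg Complex.re hq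
  have e2 : TT z = TT w := congrArg Complex.im hq
  rw [← mk_eq z, ← mk_eq w, ← AA_X hz, ← AA_X hw, e1, e2]

theorem cell_local {a : HH} (ha : a ∈ AA) {W : ℝ} : ∃ U ∈ 𝓝 a, ∀ x ∈ U, ∀ y ∈ U,
    wt (TT x) ≤ W → wt (TT y) ≤ W →
    |x.1.re - y.1.re| ≤ W * |XX x.1.re (TT x) - XX y.1.re (TT y)| + W * |TT x - TT y| := by
  rcases ha with ha | ha
  · refine ⟨cellN, cellN_open.mem_nhds ha, fun x hx y hy hwx hwy => ?_⟩
    rw [wt_of_nonpos (le_of_lt hx)] at hwx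
    rw [cellN_X hx, cellN_X hy]
    have := abs_nonneg (x.1.re - y.1.re)
    have := abs_nonneg (TT x - TT y)
    nlinarith
  · simp only [mem_iUnion] at ha
    obtain ⟨n, k, ha⟩ := ha
    refine ⟨cellA n k, (cellA_open n k).mem_nhds ha, fun x hx y hy hwx hwy => ?_⟩
    obtain ⟨a1, a2⟩ := cellA_X hx
    obtain ⟨b1, b2⟩ := cellA_X hy
    have hd : |del (TT x) - del (TT y)| ≤ 2 ^ n * |TT x - TT y| := by
      rcases le_total (TT x) (TT y) with h | h
      · have := del_band_lip hx.1.1.le h hy.1.2.le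
        rw [abs_sub_comm (TT x), abs_of_nonneg (by linarith : 0 ≤ TT y - TT x)]
        exact this
      · have := del_band_lip hy.1.1.le h hx.1.2.le
        rw [abs_of_nonneg (by linarith : 0 ≤ TT x - TT y), abs_sub_comm]
        exact this
    have hw := wt_sub hwx hwy
    have hx0 := wt_pos (TT x)
    set p := XX x.1.re (TT x)
    set q := XX y.1.re (TT y)
    set w := wt (TT x)
    set w' := wt (TT y)
    have e : x.1.re - y.1.re = w * (p - q) + (2 ^ n * q - k) * (w - w') / 2 ^ n := by
      rw [a2, b2]; field_simp; ring
    have hW : 0 < W := hx0.trans_le hwx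
    rw [e]
    refine (abs_add_le _ _).trans (add_le_add ?_ ?_)
    · rw [abs_mul, abs_of_pos hx0]; gcongr
    · rw [abs_div, abs_mul, abs_of_pos (by positivity : (0:ℝ) < 2 ^ n), div_le_iff₀ (by positivity)]
      have h1 : |w - w'| ≤ W * (2 ^ n * |TT x - TT y|) := hw.trans (by gcongr)
      have h2 := abs_nonneg (w - w')
      have h3 : |2 ^ n * q - k| * |w - w'| ≤ 1 * |w - w'| := by gcongr; linarith
      linarith

theorem hH_lower {a : HH} (ha : a ∈ AA) : ∃ U ∈ 𝓝 a, ∀ x ∈ U, ∀ y ∈ U,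
    dist x y ≤ 20 * dist (hH x) (hH y) := by
  obtain ⟨U, hU, hUl⟩ := cell_local ha (W := 2 * wt (TT a))
  obtain ⟨ε, hε, h⟩ := wt_nbhd (TT a)
  have h0 := wt_pos (TT a)
  obtain ⟨r, hr, hl⟩ := FS_lower (AA_S ha) (m := wt (TT a) / 2)
    (by change _ < wt (TT a); linarith) (by linarith)
  have hQ : ContinuousAt QQ a := by
    have hX : ContinuousAt (fun z : HH => XX z.1.re (TT z)) a := by
      obtain ⟨c, hc⟩ : ∃ c : ℝ, 0 < c ∧ ∀ z ∈ TT ⁻¹' ball (TT a) ε,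
          |XX z.1.re (TT z) - XX a.1.re (TT a)| ≤ c * |z.1.re - a.1.re| + |TT z - TT a| := by
        refine ⟨2 / wt (TT a), by positivity, fun z hz => ?_⟩
        have b1 := XX_lipu z.1.re a.1.re (TT z)
        have b2 := XX_lipt a.1.re (TT z) (TT a)
        have b3 := (h _ hz).1
        have b4 : |XX z.1.re (TT z) - XX a.1.re (TT z)| ≤ 2 / wt (TT a) * |z.1.re - a.1.re| := by
          rw [div_mul_eq_mul_div, le_div_iff₀ h0]
          have := abs_nonneg (XX z.1.re (TT z) - XX a.1.re (TT z))
          nlinarith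
        have := abs_sub_le (XX z.1.re (TT z)) (XX a.1.re (TT z)) (XX a.1.re (TT a))
        linarith
      rw [ContinuousAt, tendsto_iff_dist_tendsto_zero]
      have hlim : Tendsto (fun z : HH => c * |z.1.re - a.1.re| + |TT z - TT a|) (𝓝 a) (𝓝 0) := by
        have h1 := TT_continuous
        have h3 := re_continuous
        have : Continuous (fun z : HH => c * |z.1.re - a.1.re| + |TT z - TT a|) := by fun_prop
        have := this.tendsto a
        simpa using this
      refine squeeze_zero' (Eventually.of_forall fun z => dist_nonneg) ?_ hlim
      filter_upwards [TT_continuous.continuousAt (ball_mem_nhds _ hε)] with z hz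
      exact hc.2 z hz
    have e : QQ = fun z : HH => (XX z.1.re (TT z) : ℂ) + (TT z : ℂ) * Complex.I := by
      ext z
      exact Complex.mk_eq_add_mul_I _ _
    rw [e]
    have hT := TT_continuous.continuousAt (x := a)
    exact (Complex.continuous_ofReal.continuousAt.comp hX).add
      ((Complex.continuous_ofReal.continuousAt.comp hT).mul continuousAt_const)
  refine ⟨U ∩ (TT ⁻¹' ball (TT a) ε ∩ QQ ⁻¹' ball (QQ a) r), inter_mem hU (inter_mem
    (TT_continuous.continuousAt (ball_mem_nhds _ hε)) (hQ (ball_mem_nhds _ hr))), ?_⟩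
  rintro x ⟨hx1, hx2, hx3⟩ y ⟨hy1, hy2, hy3⟩
  have c1 := hUl x hx1 y hy1 (h _ hx2).2 (h _ hy2).2
  have c2 := (psi_bounds' fun s hs => h s (uIcc_sub_ball hx2 hy2 hs)).2
  rw [psi_TT, psi_TT] at c2
  have c3 := hl _ hx3 _ hy3
  have c4 : |XX x.1.re (TT x) - XX y.1.re (TT y)| ≤ dist (QQ x) (QQ y) := abs_re_le_dist (QQ x) (QQ y)
  have c5 : |TT x - TT y| ≤ dist (QQ x) (QQ y) := abs_im_le_dist (QQ x) (QQ y)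
  have c6 : dist x y ≤ |x.1.re - y.1.re| + |x.1.im - y.1.im| :=
    dist_mk_le x.1.re x.1.im y.1.re y.1.im
  change dist x y ≤ 20 * dist (FS (QQ x)) (FS (QQ y))
  have c7 : wt (TT a) * |XX x.1.re (TT x) - XX y.1.re (TT y)| ≤ wt (TT a) * dist (QQ x) (QQ y) := by gcongr
  have c8 : wt (TT a) * |TT x - TT y| ≤ wt (TT a) * dist (QQ x) (QQ y) := by gcongr
  have c9 : 0 ≤ dist (FS (QQ x)) (FS (QQ y)) := dist_nonneg
  linarith

theorem hH_mk (u t : ℝ) : hH (mk (u, t)) = FS ⟨XX u t, t⟩ := by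
  unfold hH QQ
  rw [TT_mk]
  rfl

theorem hH_surj : Function.Surjective hH := by
  intro b
  obtain ⟨z, rfl⟩ := FS_surjective b
  refine ⟨mk (ff z.re z.im, z.im), ?_⟩
  rw [hH_mk, XX_ff]

theorem FS_eq_iff {x y : ℝ} {b : Surf} : FS ⟨x, y⟩ = b ↔ x = (ofS b).re ∧ G x y = (ofS b).im := by
  constructor
  · rintro rfl
    exact ⟨rfl, rfl⟩
  · rintro ⟨h1, h2⟩
    change F _ = ofS b
    exact Complex.ext h1 h2

theorem hH_fiber (b : Surf) : IsPreconnected (hH ⁻¹' {b}) := by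
  set x0 := (ofS b).re with hx0
  set y0 := (ofS b).im with hy0
  set I : Set ℝ := {t | G x0 t = y0} with hI
  have hIp : IsPreconnected I := by
    have : OrdConnected I := by
      refine ⟨fun x hx y hy z hz => ?_⟩
      have a1 := G_mono x0 hz.1
      have a2 := G_mono x0 hz.2
      rw [hI, mem_setOf_eq] at *
      linarith
    exact this.isPreconnected
  have e : hH ⁻¹' {b} = mk '' {p | XX p.1 p.2 = x0 ∧ p.2 ∈ I} := by
    ext z
    constructor
    · intro hz
      have hz' : FS ⟨XX z.1.re (TT z), TT z⟩ = b := hz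
      rw [FS_eq_iff] at hz'
      refine ⟨(z.1.re, TT z), ⟨hz'.1, ?_⟩, mk_eq z⟩
      change G x0 (TT z) = y0
      rw [hx0, ← hz'.1]
      exact hz'.2
    · rintro ⟨⟨u, t⟩, ⟨h1, h2⟩, rfl⟩
      change hH _ = b
      rw [hH_mk, FS_eq_iff]
      refine ⟨h1, ?_⟩
      rw [show XX u t = x0 from h1]
      exact h2
  rw [e]
  refine IsPreconnected.image ?_ _ mk_continuous.continuousOn
  rcases I.eq_empty_or_nonempty with hE | ⟨t0, ht0⟩
  · rw [hE]; simp [isPreconnected_empty]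
  have hsp : IsPreconnected ((fun t => (ff x0 t, t)) '' I) :=
    hIp.image _ ((ff_continuous x0).prodMk continuous_id).continuousOn
  have hspsub : (fun t => (ff x0 t, t)) '' I ⊆ {p : ℝ × ℝ | XX p.1 p.2 = x0 ∧ p.2 ∈ I} := by
    rintro _ ⟨t, ht, rfl⟩
    exact ⟨XX_ff x0 t, ht⟩
  refine isPreconnected_of_forall (ff x0 t0, t0) ?_
  rintro ⟨u, t⟩ ⟨h1, h2⟩
  have hh : IsPreconnected ((fun v : ℝ => (v, t)) '' uIcc u (ff x0 t)) :=
    isPreconnected_uIcc.image _ (by fun_prop)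
  refine ⟨(fun t => (ff x0 t, t)) '' I ∪ (fun v : ℝ => (v, t)) '' uIcc u (ff x0 t),
    union_subset hspsub ?_, Or.inl ⟨t0, ht0, rfl⟩, Or.inr ⟨u, left_mem_uIcc, rfl⟩,
    IsPreconnected.union (ff x0 t, t) ⟨t, h2, rfl⟩ ⟨_, right_mem_uIcc, rfl⟩ hsp hh⟩
  rintro _ ⟨v, hv, rfl⟩
  refine ⟨?_, h2⟩
  change XX v t = x0
  have h3 := XX_ff x0 t
  simp only at h1
  rcases le_total u (ff x0 t) with h | h
  · rw [uIcc_of_le h] at hv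
    have a1 := XX_mono t hv.1
    have a2 := XX_mono t hv.2
    simp only at a1 a2
    linarith
  · rw [uIcc_of_ge h] at hv
    have a1 := XX_mono t hv.1
    have a2 := XX_mono t hv.2
    simp only at a1 a2
    linarith

theorem graph_lip (n : ℕ) (k e : ℝ) : ∃ K, LipschitzOnWith K
    (fun t : ℝ => (⟨(k + e * wt t) / 2 ^ n, psi t⟩ : ℂ)) (Icc (n:ℝ) (n + 1)) := by
  refine ⟨Real.toNNReal (|e| + 1), LipschitzOnWith.of_dist_le_mul fun s hs t ht => ?_⟩
  rw [Real.coe_toNNReal _ (by positivity)]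
  refine (dist_mk_le _ _ _ _).trans ?_
  have h1 := psi_lip.dist_le_mul s t
  rw [NNReal.coe_one, one_mul, Real.dist_eq, Real.dist_eq] at h1
  have h2 := wt_sub (wt_le_one s) (wt_le_one t)
  have hd : |del s - del t| ≤ 2 ^ n * |s - t| := by
    rcases le_total s t with h | h
    · have := del_band_lip hs.1 h ht.2
      rw [abs_sub_comm s, abs_of_nonneg (by linarith : 0 ≤ t - s)]
      exact this
    · have := del_band_lip ht.1 h hs.2
      rw [abs_of_nonneg (by linarith : 0 ≤ s - t), abs_sub_comm]
      exact this
  rw [Real.dist_eq, ← sub_div, add_sub_add_left_eq_sub, ← mul_sub, abs_div, abs_mul,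
    abs_of_pos (by positivity : (0:ℝ) < 2 ^ n)]
  have : |e| * |wt s - wt t| / 2 ^ n ≤ |e| * |s - t| := by
    rw [div_le_iff₀ (by positivity), mul_assoc]
    refine mul_le_mul_of_nonneg_left ?_ (abs_nonneg e)
    linarith
  linarith

theorem null_H : μH[2] ((AA ∪ OO)ᶜ) = 0 := by
  rw [← isometry_subtype_coe.hausdorffMeasure_image (Or.inl (by norm_num))]
  have : ((↑) : HH → ℂ) '' (AA ∪ OO)ᶜ ⊆ (⋃ n : ℕ, (fun x : ℝ => (⟨x, psi n⟩ : ℂ)) '' univ) ∪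
      ⋃ n : ℕ, ⋃ k : ℤ, ⋃ e ∈ ({1/2, -1/2} : Set ℝ),
      (fun t : ℝ => (⟨(k + e * wt t) / 2 ^ n, psi t⟩ : ℂ)) '' (Icc (n:ℝ) (n + 1)) := by
    rintro _ ⟨z, hz, rfl⟩
    by_contra hcon
    apply hz
    simp only [mem_union, mem_iUnion, not_or, not_exists] at hcon
    obtain ⟨hc1, hc2⟩ := hcon
    rcases lt_or_ge (TT z) 0 with h | h
    · exact Or.inl (Or.inl h)
    set n := ⌊TT z⌋₊
    have b1 : (n:ℝ) ≤ TT z := Nat.floor_le h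
    have b2 : TT z < n + 1 := Nat.lt_floor_add_one _
    have b1' : (n:ℝ) < TT z := by
      refine lt_of_le_of_ne b1 fun hne => hc1 n ⟨z.1.re, mem_univ _, Complex.ext rfl ?_⟩
      rw [hne]
      exact psi_TT z
    have hp : (0:ℝ) < 2 ^ n := by positivity
    have hr := abs_le.1 (abs_sub_round (2 ^ n * z.1.re))
    set k := round (2 ^ n * z.1.re)
    have hgr : ∀ e ∈ ({1/2, -1/2} : Set ℝ), 2 ^ n * z.1.re ≠ k + e * wt (TT z) := by
      intro e he hne
      refine hc2 n k e he ⟨TT z, ⟨b1, b2.le⟩, Complex.ext ?_ (psi_TT z)⟩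
      change (k + e * wt (TT z)) / 2 ^ n = z.1.re
      rw [← hne]
      field_simp
    have g1 := hgr (1/2) (by simp)
    have g2 := hgr (-1/2) (by simp)
    have hcO : ∀ k : ℤ, |2 ^ n * z.1.re - (k + 1/2)| < (1 - wt (TT z)) / 2 → z ∈ AA ∪ OO :=
      fun k hk => Or.inr (mem_iUnion.2 ⟨n, mem_iUnion.2 ⟨k, ⟨b1', b2⟩, hk⟩⟩)
    rcases lt_or_gt_of_ne g1 with l1 | l1
    · rcases lt_or_gt_of_ne g2 with l2 | l2
      · apply hcO (k - 1)
        rw [abs_lt]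
        push_cast
        constructor <;> linarith
      · refine Or.inl (Or.inr (mem_iUnion.2 ⟨n, mem_iUnion.2 ⟨k, ⟨b1', b2⟩, ?_⟩⟩))
        rw [abs_lt]
        constructor <;> linarith
    · apply hcO k
      rw [abs_lt]
      constructor <;> linarith
  refine measure_mono_null this (measure_union_null ?_ ?_)
  · exact measure_iUnion_null fun n => null_curve ((horiz_isometry _).lipschitz.lipschitzOnWith)
  · refine measure_iUnion_null fun n => measure_iUnion_null fun k => ?_
    refine (measure_biUnion_null_iff (by simp : ({1/2, -1/2} : Set ℝ).Countable)).2 fun e _ => ?_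
    obtain ⟨K, hK⟩ := graph_lip n k e
    exact null_curve hK

theorem HH_polish : PolishSpace HH :=
  (isOpen_lt Complex.continuous_im continuous_const : IsOpen {z : ℂ | z.im < VV}).polishSpace

theorem hH_continuous : Continuous hH := by
  rw [continuous_iff_continuousAt]
  intro a
  obtain ⟨U, hU, hl⟩ := hH_lip a
  exact hl.continuousOn.continuousAt hU

theorem hH_qc : WeaklyQC (((180 : ℝ≥0) : ℝ) ^ 2) hH := by
  haveI := HH_polish
  refine qc_criterion hH hH_continuous (fun _ => 9) measurable_const OO AA
    OO_open.measurableSet AA_open.measurableSet 180 (by norm_num) ?_ ?_ null_H hH_injOn ?_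
    hH_surj hH_fiber
  · intro a
    obtain ⟨U, hU, hl⟩ := hH_lip a
    exact ⟨U, hU, 9, hl, fun x _ => by simp⟩
  · intro a ha
    simp only [OO, mem_iUnion] at ha
    obtain ⟨n, k, ha⟩ := ha
    exact ⟨cellO n k, (cellO_open n k).mem_nhds ha, fun x hx => cellO_const hx ha⟩
  · intro a ha
    obtain ⟨U, hU, hl⟩ := hH_lower ha
    refine ⟨U, hU, 9, fun x _ => by simp, ?_⟩
    rintro x ⟨hx, -⟩ y ⟨hy, -⟩
    have h1 := hl x hx y hy
    rw [edist_dist, edist_dist, show ((9 : ℝ≥0) : ℝ≥0∞) = ENNReal.ofReal 9 by simp,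
      ← ENNReal.ofReal_mul (by positivity),
      show ((180 : ℝ≥0) : ℝ≥0∞) = ENNReal.ofReal 180 by simp, ← ENNReal.ofReal_mul (by norm_num)]
    apply ENNReal.ofReal_le_ofReal
    linarith

end Slit


namespace Slit

abbrev DD : Type := ↥(Metric.ball (0 : ℂ) 1)

theorem DD_norm (z : DD) : ‖z.1‖ < 1 := mem_ball_zero_iff.1 z.2

theorem DD_ne (z : DD) : 1 - z.1 ≠ 0 := by
  intro h
  have h1 := DD_norm z
  have : z.1 = 1 := (sub_eq_zero.1 h).symm
  rw [this] at h1
  simp at h1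

theorem phi_im (z : DD) : (Complex.I * VV - Complex.I * ((1 + z.1) / (1 - z.1))).im < VV := by
  have h1 : 0 < ((1 + z.1) / (1 - z.1)).re := by
    rw [Complex.div_re, ← add_div]
    apply div_pos
    · have := DD_norm z
      have h2 : Complex.normSq z.1 < 1 := by
        rw [Complex.normSq_eq_norm_sq]
        have := norm_nonneg z.1
        nlinarith
      rw [Complex.normSq_apply] at h2
      simp
      nlinarith
    · exact Complex.normSq_pos.2 (DD_ne z)
  simp only [Complex.sub_im, Complex.I_mul_im, Complex.ofReal_re]
  linarith

noncomputable def phi (z : DD) : HH := ⟨_, phi_im z⟩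

theorem om_re (z : HH) : 0 < (VV + Complex.I * z.1).re := by
  have := z.2
  simp
  linarith

theorem om_ne (z : HH) : (VV + Complex.I * z.1) + 1 ≠ 0 := by
  intro h
  have h1 := om_re z
  have := congrArg Complex.re h
  rw [Complex.add_re] at this
  simp only [Complex.one_re, Complex.zero_re] at this
  linarith

theorem inv_mem (z : HH) : ((VV + Complex.I * z.1) - 1) / ((VV + Complex.I * z.1) + 1) ∈ ball (0:ℂ) 1 := by
  have h1 := om_re z
  have h2 := om_ne z
  set w := VV + Complex.I * z.1
  rw [mem_ball_zero_iff, norm_div, div_lt_one (norm_pos_iff.2 h2)]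
  apply lt_of_pow_lt_pow_left₀ 2 (norm_nonneg _)
  rw [← Complex.normSq_eq_norm_sq, ← Complex.normSq_eq_norm_sq, Complex.normSq_apply,
    Complex.normSq_apply]
  simp
  nlinarith

noncomputable def phiInv (z : HH) : DD := ⟨_, inv_mem z⟩

noncomputable def phiHomeo : DD ≃ₜ HH where
  toFun := phi
  invFun := phiInv
  left_inv z := by
    apply Subtype.ext
    have h1 := DD_ne z
    have e : VV + Complex.I * (phi z).1 = (1 + z.1) / (1 - z.1) := by
      change VV + Complex.I * (Complex.I * VV - Complex.I * ((1 + z.1) / (1 - z.1))) = _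
      linear_combination (VV - (1 + z.1) / (1 - z.1)) * Complex.I_mul_I
    change ((VV + Complex.I * (phi z).1) - 1) / ((VV + Complex.I * (phi z).1) + 1) = z.1
    rw [e]
    field_simp
    ring
  right_inv z := by
    apply Subtype.ext
    have h1 := om_ne z
    set w := VV + Complex.I * z.1 with hw
    have e : (1 + (w - 1) / (w + 1)) / (1 - (w - 1) / (w + 1)) = w := by
      have : 1 - (w - 1) / (w + 1) = 2 / (w + 1) := by field_simp; ring
      rw [this]
      field_simp
      ring
    change Complex.I * VV - Complex.I * ((1 + (w - 1) / (w + 1)) / (1 - (w - 1) / (w + 1))) = z.1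
    rw [e, hw]
    linear_combination - z.1 * Complex.I_mul_I
  continuous_toFun := by
    apply Continuous.subtype_mk
    have : Continuous fun z : DD => (1 + z.1) / (1 - z.1) :=
      Continuous.div (by fun_prop) (by fun_prop) DD_ne
    fun_prop
  continuous_invFun := by
    apply Continuous.subtype_mk
    exact Continuous.div (by fun_prop) (by fun_prop) om_ne

theorem phi_dist (z w : DD) : dist (phi z) (phi w) * (‖1 - z.1‖ * ‖1 - w.1‖) = 2 * dist z w := by
  change dist (phi z).1 (phi w).1 * _ = 2 * dist z.1 w.1
  rw [Complex.dist_eq, Complex.dist_eq, ← norm_mul, ← norm_mul]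
  have h1 := DD_ne z
  have h2 := DD_ne w
  have : ((phi z).1 - (phi w).1) * ((1 - z.1) * (1 - w.1)) = - Complex.I * (2 * (z.1 - w.1)) := by
    change ((Complex.I * VV - Complex.I * ((1 + z.1) / (1 - z.1))) -
      (Complex.I * VV - Complex.I * ((1 + w.1) / (1 - w.1)))) * _ = _
    field_simp
    ring
  rw [this, norm_mul, norm_mul]
  simp

theorem phi_nbhd (a : DD) : ∃ U ∈ 𝓝 a, ∀ x ∈ U,
    3 / 4 * ‖1 - a.1‖ ≤ ‖1 - x.1‖ ∧ ‖1 - x.1‖ ≤ 5 / 4 * ‖1 - a.1‖ := by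
  have hr : 0 < ‖1 - a.1‖ := norm_pos_iff.2 (DD_ne a)
  refine ⟨ball a (‖1 - a.1‖ / 4), ball_mem_nhds _ (by positivity), fun x hx => ?_⟩
  have hx' : ‖x.1 - a.1‖ < ‖1 - a.1‖ / 4 := by
    rw [← Complex.dist_eq]; exact hx
  have e := abs_norm_sub_norm_le (1 - a.1) (1 - x.1)
  rw [sub_sub_sub_cancel_left, abs_le] at e
  constructor <;> linarith [e.1, e.2]

theorem phi_qc : WeaklyQC (((9 : ℝ≥0) : ℝ) ^ 2) phi := by
  have hpol : PolishSpace DD := Metric.isOpen_ball.polishSpace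
  have hc : Continuous phi := phiHomeo.continuous
  have hinj : Function.Injective phi := phiHomeo.injective
  refine qc_criterion phi hc (fun z => ENNReal.ofReal (6 / ‖1 - z.1‖ ^ 2)) ?_ ∅ univ
    MeasurableSet.empty MeasurableSet.univ 9 (by norm_num) ?_ (by simp) (by simp)
    hinj.injOn ?_ phiHomeo.surjective ?_
  · refine ENNReal.measurable_ofReal.comp (Continuous.measurable ?_)
    refine Continuous.div (by fun_prop) (by fun_prop) fun z => ?_
    have := norm_pos_iff.2 (DD_ne z)
    positivity
  · intro a
    obtain ⟨U, hU, h⟩ := phi_nbhd a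
    have hr : 0 < ‖1 - a.1‖ := norm_pos_iff.2 (DD_ne a)
    set r := ‖1 - a.1‖
    refine ⟨U, hU, Real.toNNReal (3.6 / r ^ 2), ?_, ?_⟩
    · apply LipschitzOnWith.of_dist_le_mul
      intro x hx y hy
      rw [Real.coe_toNNReal _ (by positivity), div_mul_eq_mul_div, le_div_iff₀ (by positivity)]
      have e := phi_dist x y
      have hm : (3 / 4 * r) * (3 / 4 * r) ≤ ‖1 - x.1‖ * ‖1 - y.1‖ :=
        mul_le_mul (h x hx).1 (h y hy).1 (by positivity) (by positivity)
      have h0 : 0 ≤ dist (phi x) (phi y) := dist_nonneg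
      have h1 : 0 ≤ dist x y := dist_nonneg
      have := mul_le_mul_of_nonneg_left hm h0
      rw [e] at this
      nlinarith
    · intro x hx
      change ENNReal.ofReal _ ≤ _
      apply ENNReal.ofReal_le_ofReal
      have h1 := (h x hx).2
      have hx0 := norm_pos_iff.2 (DD_ne x)
      rw [div_le_div_iff₀ (by positivity) (by positivity)]
      have := mul_le_mul h1 h1 hx0.le (by positivity)
      nlinarith
  · intro a _
    obtain ⟨U, hU, h⟩ := phi_nbhd a
    have hr : 0 < ‖1 - a.1‖ := norm_pos_iff.2 (DD_ne a)
    set r := ‖1 - a.1‖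
    refine ⟨U, hU, Real.toNNReal (11 / r ^ 2), ?_, ?_⟩
    · rintro x ⟨hx, -⟩
      change _ ≤ ENNReal.ofReal _
      apply ENNReal.ofReal_le_ofReal
      have h1 := (h x hx).1
      have hx0 := norm_pos_iff.2 (DD_ne x)
      rw [div_le_div_iff₀ (by positivity) (by positivity)]
      have := mul_le_mul h1 h1 (by positivity) hx0.le
      nlinarith
    · rintro x ⟨hx, -⟩ y ⟨hy, -⟩
      rw [edist_dist, edist_dist]
      change ENNReal.ofReal _ * _ ≤ _
      rw [← ENNReal.ofReal_mul (by positivity),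
        show ((9 : ℝ≥0) : ℝ≥0∞) = ENNReal.ofReal 9 by simp, ← ENNReal.ofReal_mul (by norm_num)]
      apply ENNReal.ofReal_le_ofReal
      rw [div_mul_eq_mul_div, div_le_iff₀ (by positivity)]
      have e := phi_dist x y
      have hm : ‖1 - x.1‖ * ‖1 - y.1‖ ≤ (5 / 4 * r) * (5 / 4 * r) :=
        mul_le_mul (h x hx).2 (h y hy).2 (by positivity) (by positivity)
      have h0 : 0 ≤ dist (phi x) (phi y) := dist_nonneg
      have h1 : 0 ≤ dist x y := dist_nonneg
      have := mul_le_mul_of_nonneg_left hm h0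
      rw [e] at this
      nlinarith
  · intro x
    refine Set.Subsingleton.isPreconnected ?_
    intro a ha b hb
    exact hinj ((show phi a = x from ha).trans (show phi b = x from hb).symm)

theorem h1_qc : WeaklyQC ((((9 : ℝ≥0) : ℝ) ^ 2) * (((180 : ℝ≥0) : ℝ) ^ 2)) (hH ∘ phiHomeo) :=
  WeaklyQC.comp_homeo phiHomeo phi_qc hH_qc (by positivity)

end Slit


end Proof

/-!
STATEMENT 11 (main claim): There exists a length metric space `X` homeomorphic to the
plane `ℂ`, with locally finite Hausdorff 2-measure, admitting weakly quasiconformal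
parametrizations by both the open unit disk `𝔻` and the plane `ℂ`.
-/

theorem exists_surface_parametrized_by_disk_and_plane :
    ∃ (X : Type) (_ : MetricSpace X) (_ : MeasurableSpace X) (_ : BorelSpace X),
      IsLengthSpace X ∧
      Nonempty (X ≃ₜ ℂ) ∧
      IsLocallyFiniteMeasure (hausdorff2 X) ∧
      (∃ K₁ : ℝ, 1 ≤ K₁ ∧ ∃ h₁ : ↥(Metric.ball (0 : ℂ) 1) → X, WeaklyQC K₁ h₁) ∧
      (∃ K₂ : ℝ, 1 ≤ K₂ ∧ ∃ h₂ : ℂ → X, WeaklyQC K₂ h₂) := by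
  exact ⟨Slit.Surf, inferInstance, inferInstance, inferInstance, Slit.lengthSpace, ⟨Slit.homeo⟩,
    Slit.locFin, ⟨_, by norm_num, _, Slit.h1_qc⟩, ⟨_, by norm_num, _, Slit.h2_qc⟩⟩
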